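/- arXiv:2509.16692 — 2 statements merged into one kernel-verified Lean document; each statement's English description precedes it below -/
import Mathlib

section
/- Let α ∈ (0,1), p ∈ [1,∞] and p' the conjugate exponent with 1/p + 1/p' = 1. There is a constant C = C(α,p) > 0 such that for all f, g ∈ C_c^∞(ℝ²) and each j ∈ {1,2}: |∫_{ℝ²} f ∂_j g dx| ≤ C (‖f‖_{L^p(ℝ²)} + sup_{h ≠ 0} |h|^{−α} ‖f(·+h) − f‖_{L^p(ℝ²)}) · (‖g‖_{L^{p'}(ℝ²)} + ∫_{ℝ²} |h|^{−(1−α)} ‖g(·+h) − g‖_{L^{p'}(ℝ²)} |h|^{−2} dh). -/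
open MeasureTheory Metric Filter Set Bornology
open scoped ENNReal NNReal Topology Real

noncomputable section

namespace Eikonal

/-! ### Basic geometric objects on `ℝ² ≃ ℂ` -/

/-- The point `e^{iθ}` of the unit circle, viewed as a complex number. -/
def circ (θ : ℝ) : ℂ := Complex.exp (θ * Complex.I)

/-- The real scalar product of `ℝ² ≃ ℂ`. -/
def dotR (z w : ℂ) : ℝ := z.re * w.re + z.im * w.im

/-- Smooth compactly supported test functions in the open set `Ω`. -/
def TestFun (Ω : Set ℂ) (ζ : ℂ → ℝ) : Prop :=
  ContDiff ℝ (⊤ : ℕ∞) ζ ∧ HasCompactSupport ζ ∧ tsupport ζ ⊆ Ω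

/-- `C¹` compactly supported test functions in `Ω`. -/
def TestFun1 (Ω : Set ℂ) (ζ : ℂ → ℝ) : Prop :=
  ContDiff ℝ 1 ζ ∧ HasCompactSupport ζ ∧ tsupport ζ ⊆ Ω

/-- `div m = 0` in the sense of distributions on `Ω`:
`∫_Ω m·∇ζ = 0` for all test functions `ζ`, where `m·∇ζ (x) = Dζ(x)[m x]`. -/
def DivFree (Ω : Set ℂ) (m : ℂ → ℂ) : Prop :=
  ∀ ζ : ℂ → ℝ, TestFun Ω ζ → (∫ x in Ω, fderiv ℝ ζ x (m x)) = 0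

/-- Weak solution of the eikonal equation on `Ω` : `|m| = 1` a.e. and `div m = 0` in `𝒟'(Ω)`. -/
def EikonalSol (Ω : Set ℂ) (m : ℂ → ℂ) : Prop :=
  AEStronglyMeasurable m (volume.restrict Ω) ∧
    (∀ᵐ x ∂(volume.restrict Ω), ‖m x‖ = 1) ∧ DivFree Ω m

/-! ### Besov seminorms (finite–difference characterization), with values in `ℝ≥0∞` -/

/-- The Besov seminorm `|m|_{B^s_{p,∞}(Ω)} = sup_{h ≠ 0} |h|^{-s} ‖m(·+h) - m‖_{L^p(Ω ∩ (Ω-h))}`. -/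
def besovE (Ω : Set ℂ) (p s : ℝ) (m : ℂ → ℂ) : ℝ≥0∞ :=
  ⨆ h : {h : ℂ // h ≠ 0},
    (‖h.1‖₊ : ℝ≥0∞) ^ (-s) *
      (∫⁻ x in Ω ∩ {x | x + h.1 ∈ Ω}, (‖m (x + h.1) - m x‖₊ : ℝ≥0∞) ^ p) ^ (1/p)

/-- The `L^p(Ω)` norm, with values in `ℝ≥0∞`. -/
def LpE (Ω : Set ℂ) (p : ℝ) (m : ℂ → ℂ) : ℝ≥0∞ :=
  (∫⁻ x in Ω, (‖m x‖₊ : ℝ≥0∞) ^ p) ^ (1/p)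

/-- The Besov norm `‖m‖_{B^s_{p,∞}(Ω)} = ‖m‖_{L^p(Ω)} + |m|_{B^s_{p,∞}(Ω)}`. -/
def besovNormE (Ω : Set ℂ) (p s : ℝ) (m : ℂ → ℂ) : ℝ≥0∞ := LpE Ω p m + besovE Ω p s m

/-! ### Entropies -/

/-- `Φ ∈ ENT`, recorded through the angular parametrization `θ ↦ Φ(e^{iθ})` together with its
derivative `φ'` : the derivative exists everywhere, is Lipschitz (i.e. `Φ ∈ C^{1,1}(S¹)`), and
satisfies the entropy condition `(d/dθ) Φ(e^{iθ}) · e^{iθ} = 0`. -/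
def IsEnt (Φ : ℂ → ℂ) (φ' : ℝ → ℂ) : Prop :=
  (∀ θ : ℝ, HasDerivAt (fun t => Φ (circ t)) (φ' θ) θ) ∧
    (∃ L : ℝ≥0, LipschitzWith L φ') ∧
    ∀ θ : ℝ, dotR (φ' θ) (circ θ) = 0

/-- `Φ ∈ ENT` with `‖Φ‖_{C^{1,1}} ≤ 1`. -/
def EntC11Ball (Φ : ℂ → ℂ) : Prop :=
  ∃ φ' : ℝ → ℂ, IsEnt Φ φ' ∧ (∀ θ, ‖Φ (circ θ)‖ ≤ 1) ∧ (∀ θ, ‖φ' θ‖ ≤ 1) ∧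
    LipschitzWith 1 φ'

/-- `Φ ∈ ENT` with `‖Φ‖_{C^{1,α}} ≤ 1`. -/
def EntC1aBall (α : ℝ) (Φ : ℂ → ℂ) : Prop :=
  ∃ φ' : ℝ → ℂ, IsEnt Φ φ' ∧ (∀ θ, ‖Φ (circ θ)‖ ≤ 1) ∧ (∀ θ, ‖φ' θ‖ ≤ 1) ∧
    ∀ θ₁ θ₂ : ℝ, ‖φ' θ₁ - φ' θ₂‖ ≤ |θ₁ - θ₂| ^ α

/-- `Φ ∈ ẼNT`: an entropy whose angular derivative is `π`-antiperiodic
(odd entropies plus constants). -/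
def EntTilde (Φ : ℂ → ℂ) : Prop :=
  ∃ φ' : ℝ → ℂ, IsEnt Φ φ' ∧ ∀ θ : ℝ, φ' (θ + π) = - φ' θ

/-- `Φ ∈ ẼNT` with `‖Φ‖_{C^{1,α}} ≤ 1`. -/
def EntTildeC1aBall (α : ℝ) (Φ : ℂ → ℂ) : Prop :=
  ∃ φ' : ℝ → ℂ, IsEnt Φ φ' ∧ (∀ θ, ‖Φ (circ θ)‖ ≤ 1) ∧ (∀ θ, ‖φ' θ‖ ≤ 1) ∧
    (∀ θ₁ θ₂ : ℝ, ‖φ' θ₁ - φ' θ₂‖ ≤ |θ₁ - θ₂| ^ α) ∧ ∀ θ : ℝ, φ' (θ + π) = - φ' θ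

/-! ### Entropy productions as measures -/

/-- Integral of a function against a signed measure. -/
def sInt {X : Type*} [MeasurableSpace X] (σ : MeasureTheory.SignedMeasure X) (f : X → ℝ) : ℝ :=
  (∫ x, f x ∂σ.toJordanDecomposition.posPart) - ∫ x, f x ∂σ.toJordanDecomposition.negPart

/-- The (finite Radon) signed measure `μ` represents the distribution
`div Φ(m) : ζ ↦ -∫_Ω Φ(m)·∇ζ`. -/
def RepresentsDiv (Ω : Set ℂ) (m Φ : ℂ → ℂ) (μ : MeasureTheory.SignedMeasure ℂ) : Prop :=
  ∀ ζ : ℂ → ℝ, TestFun Ω ζ → -(∫ x in Ω, fderiv ℝ ζ x (Φ (m x))) = sInt μ ζ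

/-- The supremum measure `ν = ⋁ {|div Φ(m)| : Φ ∈ ENT, ‖Φ‖_{C^{1,1}} ≤ 1}`. -/
def entVarC11 (Ω : Set ℂ) (m : ℂ → ℂ) : Measure ℂ :=
  ⨆ Φ : {Φ : ℂ → ℂ // EntC11Ball Φ},
    ⨆ μ : {μ : MeasureTheory.SignedMeasure ℂ // RepresentsDiv Ω m Φ.1 μ}, μ.1.totalVariation

/-- The supremum measure `⋁ {|div Φ(m)| : Φ ∈ ENT, ‖Φ‖_{C^{1,α}} ≤ 1}`. -/
def entVarC1a (α : ℝ) (Ω : Set ℂ) (m : ℂ → ℂ) : Measure ℂ :=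
  ⨆ Φ : {Φ : ℂ → ℂ // EntC1aBall α Φ},
    ⨆ μ : {μ : MeasureTheory.SignedMeasure ℂ // RepresentsDiv Ω m Φ.1 μ}, μ.1.totalVariation

/-- The supremum measure `⋁ {|div Φ(m)| : Φ ∈ ẼNT, ‖Φ‖_{C^{1,α}} ≤ 1}`. -/
def entVarTildeC1a (α : ℝ) (Ω : Set ℂ) (m : ℂ → ℂ) : Measure ℂ :=
  ⨆ Φ : {Φ : ℂ → ℂ // EntTildeC1aBall α Φ},
    ⨆ μ : {μ : MeasureTheory.SignedMeasure ℂ // RepresentsDiv Ω m Φ.1 μ}, μ.1.totalVariation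

/-- The jump set `J_m = {x ∈ Ω : limsup_{r→0} ν(B_r(x))/r > 0}`. -/
def jumpSet (Ω : Set ℂ) (m : ℂ → ℂ) : Set ℂ :=
  {x ∈ Ω | 0 < Filter.limsup
    (fun r : ℝ => entVarC11 Ω m (Metric.ball x r) / ENNReal.ofReal r) (𝓝[>] (0:ℝ))}

/-- A set `J ⊆ ℂ` is (countably) `1`-rectifiable: up to an `H¹`-null set it is covered by
countably many Lipschitz images of `ℝ`. -/
def Rect1 (J : Set ℂ) : Prop :=
  ∃ (f : ℕ → ℝ → ℂ) (K : ℕ → ℝ≥0), (∀ n, LipschitzWith (K n) (f n)) ∧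
    μH[1] (J \ ⋃ n, Set.range (f n)) = 0

/-- `n, m⁺, m⁻` are a measure-theoretic unit normal and one-sided `L¹` traces of `m`
at `H¹`-a.e. point of the jump set `J_m`. -/
def TraceData (Ω : Set ℂ) (m n mp mm : ℂ → ℂ) : Prop :=
  ∀ᵐ x ∂((μH[1] : Measure ℂ).restrict (jumpSet Ω m)),
    ‖n x‖ = 1 ∧ ‖mp x‖ = 1 ∧ ‖mm x‖ = 1 ∧
    Filter.Tendsto
      (fun r : ℝ => (∫ y in Metric.ball x r ∩ {y | 0 < dotR (y - x) (n x)}, ‖m y - mp x‖) / r^2)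
      (𝓝[>] (0:ℝ)) (𝓝 0) ∧
    Filter.Tendsto
      (fun r : ℝ => (∫ y in Metric.ball x r ∩ {y | dotR (y - x) (n x) < 0}, ‖m y - mm x‖) / r^2)
      (𝓝[>] (0:ℝ)) (𝓝 0)

/-- The subset `J_m^δ ⊆ J_m` of jumps of (angular) amplitude larger than `δ`, defined through
trace functions `m⁺ = mp`, `m⁻ = mm`. -/
def Jdelta (Ω : Set ℂ) (m mp mm : ℂ → ℂ) (δ : ℝ) : Set ℂ :=
  {x ∈ jumpSet Ω m | δ < Real.arccos (dotR (mp x) (mm x))}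

/-! ### Mollifiers -/

/-- A mollifier: `ρ ∈ C_c¹(B₁)`, `ρ ≥ 0`, `∫ ρ = 1`, `|∇ρ| ≤ 2`. -/
def Mollifier (ρ : ℂ → ℝ) : Prop :=
  ContDiff ℝ 1 ρ ∧ HasCompactSupport ρ ∧ tsupport ρ ⊆ Metric.ball 0 1 ∧
    (∀ x, 0 ≤ ρ x) ∧ (∫ x, ρ x) = 1 ∧ ∀ x, ‖fderiv ℝ ρ x‖ ≤ 2

/-- The mollification `m_ε = m * ρ_ε`, where `ρ_ε(y) = ε⁻² ρ(y/ε)`. -/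
def mollify (ρ : ℂ → ℝ) (ε : ℝ) (m : ℂ → ℂ) (x : ℂ) : ℂ :=
  ∫ y, ((ε^2)⁻¹ * ρ (ε⁻¹ • y)) • m (x - y)

/-! ### The kinetic formulation -/

/-- `χ(x,s) = 1` if `e^{is}·m(x) > 0` and `0` otherwise. -/
def chi (m : ℂ → ℂ) (x : ℂ) (s : ℝ) : ℝ := if 0 < dotR (circ s) (m x) then 1 else 0

/-- Test functions for the kinetic equation on `Ω × 𝕋` (`𝕋 = ℝ/2πℤ`): smooth, `2π`-periodic in
the kinetic variable, compactly supported inside `Ω` in the space variable. -/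
def KineticTest (Ω : Set ℂ) (φ : ℂ → ℝ → ℝ) : Prop :=
  ContDiff ℝ (⊤ : ℕ∞) (fun p : ℂ × ℝ => φ p.1 p.2) ∧ (∀ x s, φ x (s + 2*π) = φ x s) ∧
    ∃ K : Set ℂ, IsCompact K ∧ K ⊆ Ω ∧ ∀ x ∉ K, ∀ s, φ x s = 0

/-- `σ` is a kinetic measure for `m` : it is a finite signed (Radon) measure on `Ω × 𝕋`
(realized as `Ω × [0,2π)`) such that `e^{is}·∇ₓχ = ∂ₛσ` in `𝒟'(Ω × 𝕋)`. -/
def IsKineticMeasure (Ω : Set ℂ) (m : ℂ → ℂ) (σ : MeasureTheory.SignedMeasure (ℂ × ℝ)) : Prop :=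
  σ.totalVariation (Ω ×ˢ Set.Ico 0 (2*π))ᶜ = 0 ∧
    ∀ φ : ℂ → ℝ → ℝ, KineticTest Ω φ →
      (∫ x in Ω, ∫ s in Set.Ico 0 (2*π), chi m x s * fderiv ℝ (fun y => φ y s) x (circ s))
        = - sInt σ (fun p => deriv (fun s => φ p.1 s) p.2)

/-- `σ` is the kinetic measure of minimal total variation. -/
def IsMinKinetic (Ω : Set ℂ) (m : ℂ → ℂ) (σ : MeasureTheory.SignedMeasure (ℂ × ℝ)) : Prop :=
  IsKineticMeasure Ω m σ ∧
    ∀ σ' : MeasureTheory.SignedMeasure (ℂ × ℝ), IsKineticMeasure Ω m σ' →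
      σ.totalVariation Set.univ ≤ σ'.totalVariation Set.univ

/-- `ν_min = (p_x)_♯ |σ_min|`. -/
def nuMin (σ : MeasureTheory.SignedMeasure (ℂ × ℝ)) : Measure ℂ :=
  σ.totalVariation.map Prod.fst

/-- The entropy `Φ_ψ(z) = ∫_𝕋 1_{e^{is}·z>0} ψ(s) e^{is} ds` associated with `ψ : 𝕋 → ℝ`. -/
def PhiPsi (ψ : ℝ → ℝ) (z : ℂ) : ℂ :=
  ∫ s in Set.Ico 0 (2*π), {s' : ℝ | 0 < dotR (circ s') z}.indicator (fun s' => ψ s' • circ s') s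

/-! ### Lagrangian representations -/

/-- A (candidate) Lagrangian trajectory: a time interval `(tm, tp)`, a spatial component `x`,
a lifted angular component `s`, and the derivative measure `Ds` of `s`. -/
structure Curve where
  tm : ℝ
  tp : ℝ
  x : ℝ → ℂ
  s : ℝ → ℝ
  Ds : MeasureTheory.SignedMeasure ℝ

instance : MeasurableSpace Curve := ⊤

/-- The open time interval of a curve. -/
def Curve.I (γ : Curve) : Set ℝ := Set.Ioo γ.tm γ.tp

/-- A curve is admissible: `0 ≤ tm ≤ tp ≤ T`, `γ_x` Lipschitz with values in `Ω̄`, `γ_s`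
right-continuous of bounded variation with derivative measure `Ds` carried by the time interval. -/
def Curve.Valid (T : ℝ) (Ω : Set ℂ) (γ : Curve) : Prop :=
  0 ≤ γ.tm ∧ γ.tm ≤ γ.tp ∧ γ.tp ≤ T ∧
    (∃ L : ℝ≥0, LipschitzOnWith L γ.x (Set.Icc γ.tm γ.tp)) ∧
    (∀ t ∈ Set.Icc γ.tm γ.tp, γ.x t ∈ closure Ω) ∧
    (∀ t ∈ γ.I, Filter.Tendsto γ.s (𝓝[>] t) (𝓝 (γ.s t))) ∧
    (∀ a ∈ γ.I, ∀ b ∈ γ.I, a ≤ b → γ.s b - γ.s a = γ.Ds (Set.Ioc a b)) ∧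
    γ.Ds.totalVariation γ.Iᶜ = 0

/-- Reduction mod `2π` to `[0, 2π)`. -/
def wrap (s : ℝ) : ℝ := s - 2*π*(⌊s/(2*π)⌋ : ℝ)

/-- The set of atoms of a signed measure on `ℝ`. -/
def atomSet (μ : MeasureTheory.SignedMeasure ℝ) : Set ℝ := {t | μ.totalVariation {t} ≠ 0}

/-- `|D^j v|`: the jump (atomic) part of the total variation of a derivative measure. -/
def jumpTV (μ : MeasureTheory.SignedMeasure ℝ) : Measure ℝ :=
  μ.totalVariation.restrict (atomSet μ)

/-- `|D̃ v|`: the diffuse (continuous) part of the total variation of a derivative measure. -/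
def diffTV (μ : MeasureTheory.SignedMeasure ℝ) : Measure ℝ :=
  μ.totalVariation.restrict (atomSet μ)ᶜ

/-- `ω` is a Lagrangian representation of `m` on `[0,T]`. -/
def IsLagRep (T : ℝ) (Ω : Set ℂ) (m : ℂ → ℂ) (ω : Measure Curve) : Prop :=
  (∀ᵐ γ ∂ω, γ.Valid T Ω) ∧
  (∀ t ∈ Set.Ioo (0:ℝ) T,
    Measure.map (fun γ : Curve => (γ.x t, wrap (γ.s t))) (ω.restrict {γ : Curve | t ∈ γ.I})
      = ((volume.restrict Ω).prod (volume.restrict (Set.Ico 0 (2*π)))).restrict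
          {p : ℂ × ℝ | 0 < dotR (circ p.2) (m p.1)}) ∧
  (∀ᵐ γ ∂ω, ∀ᵐ t ∂(volume.restrict γ.I), HasDerivAt γ.x (circ (γ.s t)) t) ∧
  (∫⁻ γ, γ.Ds.totalVariation Set.univ ∂ω) < ⊤ ∧
  (∀ᵐ γ ∂ω, (0 < γ.tm → γ.x γ.tm ∈ frontier Ω) ∧ (γ.tp < T → γ.x γ.tp ∈ frontier Ω))

/-- `ω` is a minimal Lagrangian representation of `m`, relative to the minimal kinetic
measure `σmin`. -/
def IsMinLagRep (T : ℝ) (Ω : Set ℂ) (m : ℂ → ℂ) (σmin : MeasureTheory.SignedMeasure (ℂ × ℝ))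
    (ω : Measure Curve) : Prop :=
  IsLagRep T Ω m ω ∧
    (∫⁻ γ, γ.Ds.totalVariation Set.univ ∂ω) = ENNReal.ofReal T * σmin.totalVariation Set.univ

/-- A bounded open set of class `C^{1,1}`: near each boundary point, `Ω` is the subgraph of a
`C^{1,1}` function in a suitable orthonormal frame. -/
def C11Domain (Ω : Set ℂ) : Prop :=
  ∀ z ∈ frontier Ω, ∃ (e : ℂ) (r : ℝ) (f f' : ℝ → ℝ) (L : ℝ≥0),
    0 < r ∧ ‖e‖ = 1 ∧ (∀ t, HasDerivAt f (f' t) t) ∧ LipschitzWith L f' ∧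
    ∀ y ∈ Metric.ball z r, (y ∈ Ω ↔ dotR (y - z) e < f (dotR (y - z) (Complex.I * e)))

/-- `x` is a Lebesgue point of `f` with value `c`, with respect to the measure `ρ`. -/
def LebesguePtVal (ρ : Measure ℂ) (f : ℂ → ℝ) (x : ℂ) (c : ℝ) : Prop :=
  f x = c ∧
    Filter.Tendsto
      (fun r : ℝ => (∫⁻ y in Metric.ball x r, ENNReal.ofReal |f y - c| ∂ρ) / ρ (Metric.ball x r))
      (𝓝[>] (0:ℝ)) (𝓝 0)

/-!
With `Δ_h u = u(· + h) - u`, the increment of the difference quotients of `g` when the step `2s` is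
halved pairs with `f` as `-|2s|⁻¹ ∫ Δ_{-s} f · Δ_s g`: the second difference of `g` is a first
difference of `Δ_s g`, and translating the integral moves it onto `f`. Telescoping over the dyadic
steps `s = 2⁻ⁿ v` and applying Hölder's inequality bounds `∫ f ∂_v g` by `‖f‖_p ‖g‖_q` plus the
seminorm of `f` times the dyadic sum `∑ |s|^{-(1-α)} ‖Δ_s g‖_q`.

That sum samples `h ↦ ‖Δ_h g‖_q` only on a null set, but subadditivity in `h` bounds the value at
`s` by twice the mean over any ball centred at `s / 2`. For radius `|s| / 6` these balls are
disjoint along the dyadic sequence, so their contributions add up to at most the integral over all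
`h`.
-/

lemma enorm_integral_mul_le_eLpNorm_mul_eLpNorm {X : Type*} [MeasurableSpace X] {μ : Measure X}
    {p q : ℝ≥0∞} [ENNReal.HolderConjugate p q] {a b : X → ℝ} (ha : AEStronglyMeasurable a μ)
    (hb : AEStronglyMeasurable b μ) :
    ‖∫ x, a x * b x ∂μ‖ₑ ≤ eLpNorm a p μ * eLpNorm b q μ :=
  calc ‖∫ x, a x * b x ∂μ‖ₑ
    _ ≤ ∫⁻ x, ‖a x * b x‖ₑ ∂μ := enorm_integral_le_lintegral_enorm _
    _ = eLpNorm (a • b) 1 μ := eLpNorm_one_eq_lintegral_enorm.symm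
    _ ≤ eLpNorm a p μ * eLpNorm b q μ := eLpNorm_smul_le_mul_eLpNorm hb ha

section LpModulus

variable {E F : Type*} [MeasurableSpace E] [NormedAddCommGroup F]

/-- The `L^p` modulus of continuity `h ↦ ‖u(· + h) - u‖_p`, from which both Besov seminorms are
built. -/
def lpModulus [Add E] (u : E → F) (p : ℝ≥0∞) (μ : Measure E) (h : E) : ℝ≥0∞ :=
  eLpNorm (fun x => u (x + h) - u x) p μ

section Translation

variable [AddMonoid E] [MeasurableAdd E] {μ : Measure E} [μ.IsAddRightInvariant] {u : E → F}
  {p : ℝ≥0∞}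

lemma aestronglyMeasurable_comp_add_right (hu : AEStronglyMeasurable u μ) (h : E) :
    AEStronglyMeasurable (fun x => u (x + h)) μ :=
  hu.comp_measurePreserving (measurePreserving_add_right μ h)

lemma eLpNorm_comp_add_right (hu : AEStronglyMeasurable u μ) (h : E) :
    eLpNorm (fun x => u (x + h)) p μ = eLpNorm u p μ :=
  eLpNorm_comp_measurePreserving hu (measurePreserving_add_right μ h)

lemma lpModulus_le_two_mul_eLpNorm (hp : 1 ≤ p) (hu : AEStronglyMeasurable u μ) (h : E) :
    lpModulus u p μ h ≤ 2 * eLpNorm u p μ :=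
  calc lpModulus u p μ h
    _ ≤ eLpNorm (fun x => u (x + h)) p μ + eLpNorm u p μ :=
      eLpNorm_sub_le (aestronglyMeasurable_comp_add_right hu h) hu hp
    _ = 2 * eLpNorm u p μ := by rw [eLpNorm_comp_add_right hu, two_mul]

lemma lpModulus_add_le (hp : 1 ≤ p) (hu : AEStronglyMeasurable u μ) (h k : E) :
    lpModulus u p μ (h + k) ≤ lpModulus u p μ h + lpModulus u p μ k := by
  have hdiff (l : E) : AEStronglyMeasurable (fun x => u (x + l) - u x) μ :=
    (aestronglyMeasurable_comp_add_right hu l).sub hu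
  have hsplit : (fun x => u (x + (h + k)) - u x) =
      (fun x => u (x + h + k) - u (x + h)) + fun x => u (x + h) - u x := by
    ext x
    simp [add_assoc]
  calc lpModulus u p μ (h + k)
    _ ≤ eLpNorm (fun x => u (x + h + k) - u (x + h)) p μ + lpModulus u p μ h := by
      rw [lpModulus, hsplit]
      exact eLpNorm_add_le (aestronglyMeasurable_comp_add_right (hdiff k) h) (hdiff h) hp
    _ = lpModulus u p μ h + lpModulus u p μ k := by
      rw [eLpNorm_comp_add_right (hdiff k) h, ← lpModulus, add_comm]

end Translation

lemma measurable_lpModulus [TopologicalSpace E] [FirstCountableTopology E] [BorelSpace E] [Add E]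
    [ContinuousAdd E] [SecondCountableTopologyEither E F] {u : E → F} (hu : Continuous u)
    (p : ℝ≥0∞) (μ : Measure E) : Measurable (lpModulus u p μ) := by
  refine measurable_of_Iic fun c => (IsSeqClosed.isClosed fun h h₀ hle hlim => ?_).measurableSet
  have hpointwise (x : E) :
      Tendsto (fun n => u (x + h n) - u x) atTop (𝓝 (u (x + h₀) - u x)) :=
    ((hu.tendsto _).comp (hlim.const_add x)).sub_const _
  have hfatou : lpModulus u p μ h₀ ≤ liminf (fun n => lpModulus u p μ (h n)) atTop :=
    Lp.eLpNorm_lim_le_liminf_eLpNorm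
      (fun n => Continuous.aestronglyMeasurable (by fun_prop)) _ (ae_of_all _ hpointwise)
  exact hfatou.trans (liminf_le_of_frequently_le' (Frequently.of_forall hle))

end LpModulus

section MidBall

variable {E : Type*} [NormedAddCommGroup E] [NormedSpace ℝ E]

/-- The ball of radius `‖s‖ / 6` about the midpoint of `[0, s]`. The radius is chosen so that the
ball lies in the annulus `‖s‖ / 3 < ‖h‖ < 2 ‖s‖ / 3`, whose dyadic rescalings are disjoint. -/
def midBall (s : E) : Set E := ball ((2⁻¹ : ℝ) • s) (‖s‖ / 6)

lemma norm_mem_Ioo_of_mem_midBall {s h : E} (hh : h ∈ midBall s) :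
    ‖h‖ ∈ Ioo (‖s‖ / 3) (2 * ‖s‖ / 3) := by
  have hdist : ‖h - (2⁻¹ : ℝ) • s‖ < ‖s‖ / 6 := mem_ball_iff_norm.1 hh
  have hcenter : ‖(2⁻¹ : ℝ) • s‖ = ‖s‖ / 2 := by
    rw [norm_smul, Real.norm_of_nonneg (by norm_num)]
    ring
  have habs := abs_le.1 (abs_norm_sub_norm_le h ((2⁻¹ : ℝ) • s))
  constructor <;> linarith [habs.1, habs.2]

lemma enorm_le_of_mem_midBall {s h : E} (hh : h ∈ midBall s) : ‖h‖ₑ ≤ ‖s‖ₑ := by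
  rw [enorm_le_iff_norm_le]
  linarith [(norm_mem_Ioo_of_mem_midBall hh).2, norm_nonneg s]

lemma disjoint_midBall {s t : E} (hst : 2 * ‖t‖ ≤ ‖s‖) : Disjoint (midBall s) (midBall t) := by
  refine disjoint_left.2 fun h hs ht => ?_
  linarith [(norm_mem_Ioo_of_mem_midBall hs).1, (norm_mem_Ioo_of_mem_midBall ht).2]

lemma pairwise_disjoint_midBall_dyadic (v : E) :
    Pairwise (Function.onFun Disjoint fun n : ℕ => midBall ((2⁻¹ : ℝ) ^ (n + 1) • v)) := by
  refine (pairwise_disjoint_on _).2 fun m n hmn => disjoint_midBall ?_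
  have hpow : (2⁻¹ : ℝ) ^ (n + 1) ≤ 2⁻¹ ^ (m + 1 + 1) :=
    pow_le_pow_of_le_one (by norm_num) (by norm_num) (by lia)
  simp only [norm_smul, norm_pow, norm_inv, Real.norm_ofNat]
  calc 2 * (2⁻¹ ^ (n + 1) * ‖v‖)
    _ ≤ 2 * (2⁻¹ ^ (m + 1 + 1) * ‖v‖) := by gcongr
    _ = 2⁻¹ ^ (m + 1) * ‖v‖ := by ring

variable [MeasurableSpace E]

/-- The scale-invariant ratio `‖s‖ ^ d / μ (midBall s)`, where `d` is the dimension. -/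
def midBallRatio (μ : Measure E) : ℝ≥0∞ := 6 ^ Module.finrank ℝ E / μ (ball 0 1)

variable (μ : Measure E) [μ.IsAddHaarMeasure]

lemma midBallRatio_ne_top : midBallRatio μ ≠ ⊤ :=
  ENNReal.div_ne_top (by simp) (measure_ball_pos μ 0 one_pos).ne'

lemma midBallRatio_mul_measure_midBall [BorelSpace E] [FiniteDimensional ℝ E] {s : E} (hs : s ≠ 0) :
    midBallRatio μ * μ (midBall s) = ‖s‖ₑ ^ Module.finrank ℝ E := by
  have hball₀ : μ (ball 0 1) ≠ 0 := (measure_ball_pos μ 0 one_pos).ne'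
  have hpos : 0 < ‖s‖ / 6 := by positivity
  have hradius : ENNReal.ofReal (‖s‖ / 6) = ‖s‖ₑ / 6 := by
    rw [ENNReal.ofReal_div_of_pos (by norm_num), ofReal_norm, ENNReal.ofReal_ofNat]
  rw [midBallRatio, midBall, Measure.addHaar_ball_of_pos μ _ hpos,
    ENNReal.ofReal_pow hpos.le, hradius, mul_comm (_ ^ _) (μ _), ← mul_assoc,
    ENNReal.div_mul_cancel hball₀ measure_ball_lt_top.ne, ← mul_pow,
    ENNReal.mul_div_cancel (by norm_num) (by norm_num)]

end MidBall

section Subadditive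

variable {E : Type*} [NormedAddCommGroup E] [NormedSpace ℝ E] [MeasurableSpace E] [BorelSpace E]
  [FiniteDimensional ℝ E] {μ : Measure E} [μ.IsAddHaarMeasure] {ω : E → ℝ≥0∞}

lemma setLIntegral_ball_half_sub_left (hω : Measurable ω) (s : E) (r : ℝ) :
    ∫⁻ h in ball ((2⁻¹ : ℝ) • s) r, ω (s - h) ∂μ = ∫⁻ h in ball ((2⁻¹ : ℝ) • s) r, ω h ∂μ := by
  have hsymm : (s - ·) ⁻¹' ball ((2⁻¹ : ℝ) • s) r = ball ((2⁻¹ : ℝ) • s) r := by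
    ext h
    have hreflect : s - h - (2⁻¹ : ℝ) • s = (2⁻¹ : ℝ) • s - h := by module
    rw [mem_preimage, mem_ball_iff_norm, mem_ball_iff_norm', hreflect]
  simpa only [hsymm] using
    (Measure.measurePreserving_sub_left μ s).setLIntegral_comp_preimage
      (measurableSet_ball (x := (2⁻¹ : ℝ) • s) (ε := r)) hω

lemma mul_measure_ball_half_le (hω : Measurable ω) (hadd : ∀ h k, ω (h + k) ≤ ω h + ω k) (s : E)
    (r : ℝ) :
    ω s * μ (ball ((2⁻¹ : ℝ) • s) r) ≤ 2 * ∫⁻ h in ball ((2⁻¹ : ℝ) • s) r, ω h ∂μ :=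
  calc ω s * μ (ball ((2⁻¹ : ℝ) • s) r)
    _ = ∫⁻ _ in ball ((2⁻¹ : ℝ) • s) r, ω s ∂μ := (setLIntegral_const _ _).symm
    _ ≤ ∫⁻ h in ball ((2⁻¹ : ℝ) • s) r, (ω h + ω (s - h)) ∂μ :=
      lintegral_mono fun h => by simpa only [add_sub_cancel] using hadd h (s - h)
    _ = 2 * ∫⁻ h in ball ((2⁻¹ : ℝ) • s) r, ω h ∂μ := by
      rw [lintegral_add_left hω, setLIntegral_ball_half_sub_left hω, two_mul]

lemma le_two_mul_midBallRatio_mul_setLIntegral (hω : Measurable ω)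
    (hadd : ∀ h k, ω (h + k) ≤ ω h + ω k) {s : E} (hs : s ≠ 0) :
    ω s ≤ 2 * midBallRatio μ *
      (‖s‖ₑ ^ (-(Module.finrank ℝ E : ℝ)) * ∫⁻ h in midBall s, ω h ∂μ) := by
  have hpow : ‖s‖ₑ ^ (-(Module.finrank ℝ E : ℝ)) * ‖s‖ₑ ^ Module.finrank ℝ E = 1 := by
    rw [ENNReal.rpow_neg, ENNReal.rpow_natCast]
    exact ENNReal.inv_mul_cancel (pow_ne_zero _ (enorm_ne_zero.2 hs)) (by simp)
  calc ω s
    _ = ‖s‖ₑ ^ (-(Module.finrank ℝ E : ℝ)) * (midBallRatio μ * (ω s * μ (midBall s))) := by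
      rw [mul_left_comm _ (ω s), midBallRatio_mul_measure_midBall μ hs, mul_left_comm, hpow,
        mul_one]
    _ ≤ ‖s‖ₑ ^ (-(Module.finrank ℝ E : ℝ)) *
        (midBallRatio μ * (2 * ∫⁻ h in midBall s, ω h ∂μ)) := by
      gcongr _ * (_ * ?_)
      exact mul_measure_ball_half_le hω hadd s _
    _ = _ := by ring

lemma enorm_rpow_mul_le_setLIntegral_midBall (hω : Measurable ω)
    (hadd : ∀ h k, ω (h + k) ≤ ω h + ω k) {β : ℝ} (hβ : 0 ≤ β) {s : E} (hs : s ≠ 0) :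
    ‖s‖ₑ ^ (-β) * ω s ≤ 2 * midBallRatio μ *
      ∫⁻ h in midBall s, ‖h‖ₑ ^ (-β) * ω h * ‖h‖ₑ ^ (-(Module.finrank ℝ E : ℝ)) ∂μ := by
  have hweight {γ : ℝ} (hγ : 0 ≤ γ) {h : E} (hh : h ∈ midBall s) :
      ‖s‖ₑ ^ (-γ) ≤ ‖h‖ₑ ^ (-γ) := by
    rw [ENNReal.rpow_neg, ENNReal.rpow_neg, ENNReal.inv_le_inv]
    exact ENNReal.rpow_le_rpow (enorm_le_of_mem_midBall hh) hγ
  calc ‖s‖ₑ ^ (-β) * ω s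
    _ ≤ ‖s‖ₑ ^ (-β) * (2 * midBallRatio μ *
        (‖s‖ₑ ^ (-(Module.finrank ℝ E : ℝ)) * ∫⁻ h in midBall s, ω h ∂μ)) := by
      gcongr
      exact le_two_mul_midBallRatio_mul_setLIntegral hω hadd hs
    _ = 2 * midBallRatio μ *
        ∫⁻ h in midBall s, ‖s‖ₑ ^ (-β) * ‖s‖ₑ ^ (-(Module.finrank ℝ E : ℝ)) * ω h ∂μ := by
      rw [lintegral_const_mul _ hω]
      ring
    _ ≤ 2 * midBallRatio μ *
        ∫⁻ h in midBall s, ‖h‖ₑ ^ (-β) * ω h * ‖h‖ₑ ^ (-(Module.finrank ℝ E : ℝ)) ∂μ := by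
      gcongr 2 * midBallRatio μ * ?_
      refine setLIntegral_mono' measurableSet_ball fun h hh => ?_
      rw [mul_right_comm]
      gcongr ?_ * _ * ?_
      · exact hweight hβ hh
      · exact hweight (Nat.cast_nonneg _) hh

lemma tsum_dyadic_le_lintegral (hω : Measurable ω) (hadd : ∀ h k, ω (h + k) ≤ ω h + ω k) {β : ℝ}
    (hβ : 0 ≤ β) {v : E} (hv : v ≠ 0) :
    ∑' n : ℕ, ‖(2⁻¹ : ℝ) ^ (n + 1) • v‖ₑ ^ (-β) * ω ((2⁻¹ : ℝ) ^ (n + 1) • v) ≤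
      2 * midBallRatio μ *
        ∫⁻ h, ‖h‖ₑ ^ (-β) * ω h * ‖h‖ₑ ^ (-(Module.finrank ℝ E : ℝ)) ∂μ := by
  let w (h : E) : ℝ≥0∞ := ‖h‖ₑ ^ (-β) * ω h * ‖h‖ₑ ^ (-(Module.finrank ℝ E : ℝ))
  let B (n : ℕ) : Set E := midBall ((2⁻¹ : ℝ) ^ (n + 1) • v)
  calc ∑' n : ℕ, ‖(2⁻¹ : ℝ) ^ (n + 1) • v‖ₑ ^ (-β) * ω ((2⁻¹ : ℝ) ^ (n + 1) • v)
    _ ≤ ∑' n, 2 * midBallRatio μ * ∫⁻ h in B n, w h ∂μ :=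
      ENNReal.tsum_le_tsum fun n =>
        enorm_rpow_mul_le_setLIntegral_midBall hω hadd hβ (smul_ne_zero (by positivity) hv)
    _ = 2 * midBallRatio μ * ∫⁻ h in ⋃ n, B n, w h ∂μ := by
      rw [ENNReal.tsum_mul_left, lintegral_iUnion (s := B) (fun _ => measurableSet_ball)
        (pairwise_disjoint_midBall_dyadic v)]
    _ ≤ 2 * midBallRatio μ * ∫⁻ h, w h ∂μ := by
      gcongr _ * ?_
      exact setLIntegral_le_lintegral _ _

end Subadditive

section Besov

variable {E F : Type*} [NormedAddCommGroup E] [MeasurableSpace E] [NormedAddCommGroup F]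

/-- The seminorm of the Besov space `B^α_{p,∞}`, by finite differences. -/
def besovSupSeminorm (α : ℝ) (u : E → F) (p : ℝ≥0∞) (μ : Measure E) : ℝ≥0∞ :=
  ⨆ h : {h : E // h ≠ 0}, ‖h.1‖ₑ ^ (-α) * lpModulus u p μ h.1

/-- The seminorm of the Besov space `B^β_{q,1}`, by finite differences. The measure
`‖h‖ ^ (-d) dh`, with `d` the dimension, is the scale-invariant one. -/
def besovIntSeminorm [NormedSpace ℝ E] (β : ℝ) (u : E → F) (q : ℝ≥0∞) (μ : Measure E) : ℝ≥0∞ :=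
  ∫⁻ h, ‖h‖ₑ ^ (-β) * lpModulus u q μ h * ‖h‖ₑ ^ (-(Module.finrank ℝ E : ℝ)) ∂μ

lemma lpModulus_le_enorm_rpow_mul_besovSupSeminorm (α : ℝ) (u : E → F) (p : ℝ≥0∞) (μ : Measure E)
    {h : E} (hh : h ≠ 0) :
    lpModulus u p μ h ≤ ‖h‖ₑ ^ α * besovSupSeminorm α u p μ :=
  calc lpModulus u p μ h
    _ = ‖h‖ₑ ^ α * (‖h‖ₑ ^ (-α) * lpModulus u p μ h) := by
      rw [← mul_assoc, ← ENNReal.rpow_add _ _ (enorm_ne_zero.2 hh) (by simp), add_neg_cancel,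
        ENNReal.rpow_zero, one_mul]
    _ ≤ ‖h‖ₑ ^ α * besovSupSeminorm α u p μ := by
      gcongr
      exact le_iSup (fun h : {h : E // h ≠ 0} => ‖h.1‖ₑ ^ (-α) * lpModulus u p μ h.1) ⟨h, hh⟩

lemma tsum_dyadic_lpModulus_le_besovIntSeminorm [NormedSpace ℝ E] [BorelSpace E]
    [FiniteDimensional ℝ E] {μ : Measure E} [μ.IsAddHaarMeasure] {β : ℝ} (hβ : 0 ≤ β) {u : E → F}
    (hu : Continuous u) {q : ℝ≥0∞} (hq : 1 ≤ q) {v : E} (hv : v ≠ 0) :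
    ∑' n : ℕ, ‖(2⁻¹ : ℝ) ^ (n + 1) • v‖ₑ ^ (-β) * lpModulus u q μ ((2⁻¹ : ℝ) ^ (n + 1) • v) ≤
      2 * midBallRatio μ * besovIntSeminorm β u q μ :=
  tsum_dyadic_le_lintegral (measurable_lpModulus hu q μ)
    (lpModulus_add_le hq hu.aestronglyMeasurable) hβ hv

end Besov

section SecondDifference

variable {E : Type*} [SeminormedAddCommGroup E] [MeasurableSpace E] {μ : Measure E} {f g : E → ℝ}
  {C : ℝ≥0}

lemma integrable_mul_sub_comp_add_right [OpensMeasurableSpace E] (hf : Integrable f μ)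
    (hg : LipschitzWith C g) (h k : E) :
    Integrable (fun x => f x * (g (x + h) - g (x + k))) μ := by
  have hgc := hg.continuous
  refine hf.mul_bdd (c := C * ‖h - k‖) (Continuous.aestronglyMeasurable (by fun_prop))
    (ae_of_all _ fun x => ?_)
  simpa only [add_sub_add_left_eq_sub] using hg.norm_sub_le (x + h) (x + k)

lemma two_mul_integral_mul_sub_sub_eq [BorelSpace E] [μ.IsAddRightInvariant]
    (hf : Integrable f μ) (hg : LipschitzWith C g) (s : E) :
    2 * (∫ x, f x * (g (x + s) - g x) ∂μ) - ∫ x, f x * (g (x + (s + s)) - g x) ∂μ =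
      -∫ x, (f (x + -s) - f x) * (g (x + s) - g x) ∂μ := by
  have hint {a : E → ℝ} (ha : Integrable a μ) (h : E) :
      Integrable (fun x => a x * (g (x + h) - g x)) μ := by
    simpa only [add_zero] using integrable_mul_sub_comp_add_right ha hg h 0
  have htranslate : ∫ x, f (x + -s) * (g (x + s) - g x) ∂μ =
      ∫ x, f x * (g (x + (s + s)) - g (x + s)) ∂μ := by
    rw [← integral_add_right_eq_self (fun x => f (x + -s) * (g (x + s) - g x)) s]
    simp only [add_assoc, add_neg_cancel, add_zero]
  have hsplit : ∫ x, f x * (g (x + (s + s)) - g x) ∂μ =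
      (∫ x, f x * (g (x + (s + s)) - g (x + s)) ∂μ) + ∫ x, f x * (g (x + s) - g x) ∂μ := by
    rw [← integral_add (integrable_mul_sub_comp_add_right hf hg _ _) (hint hf s)]
    congr with x
    ring
  simp only [sub_mul]
  rw [integral_sub (hint (hf.comp_add_right (-s)) s) (hint hf s), htranslate, hsplit]
  ring

end SecondDifference

section SlopePairing

variable {E : Type*} [NormedAddCommGroup E] [NormedSpace ℝ E] [MeasurableSpace E] {f g : E → ℝ}
  {C : ℝ≥0} {p q : ℝ≥0∞} {v : E}

/-- The pairing of `f` with the difference quotient of `g` of step `t` in direction `v`. -/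
def slopePairing (f g : E → ℝ) (μ : Measure E) (v : E) (t : ℝ) : ℝ :=
  t⁻¹ * ∫ x, f x * (g (x + t • v) - g x) ∂μ

section Increments

variable [BorelSpace E] {μ : Measure E} [μ.IsAddRightInvariant]

lemma slopePairing_half_sub (hf : Integrable f μ) (hg : LipschitzWith C g) (v : E) (t : ℝ) :
    slopePairing f g μ v (2⁻¹ * t) - slopePairing f g μ v t =
      -(t⁻¹ * ∫ x, (f (x + -((2⁻¹ * t) • v)) - f x) * (g (x + (2⁻¹ * t) • v) - g x) ∂μ) := by
  have hdouble : t • v = (2⁻¹ * t) • v + (2⁻¹ * t) • v := by module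
  rw [← mul_neg, ← two_mul_integral_mul_sub_sub_eq hf hg, ← hdouble, slopePairing, slopePairing,
    mul_inv, inv_inv]
  ring

variable [ENNReal.HolderConjugate p q]

lemma enorm_slopePairing_one_le (hf : AEStronglyMeasurable f μ) (hg : AEStronglyMeasurable g μ)
    (v : E) : ‖slopePairing f g μ v 1‖ₑ ≤ 2 * (eLpNorm f p μ * eLpNorm g q μ) := by
  rw [slopePairing, inv_one, one_mul, one_smul]
  calc ‖∫ x, f x * (g (x + v) - g x) ∂μ‖ₑ
    _ ≤ eLpNorm f p μ * lpModulus g q μ v :=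
      enorm_integral_mul_le_eLpNorm_mul_eLpNorm hf
        ((aestronglyMeasurable_comp_add_right hg v).sub hg)
    _ ≤ eLpNorm f p μ * (2 * eLpNorm g q μ) := by
      gcongr
      exact lpModulus_le_two_mul_eLpNorm (ENNReal.HolderConjugate.one_le q p) hg v
    _ = 2 * (eLpNorm f p μ * eLpNorm g q μ) := mul_left_comm _ _ _

lemma enorm_slopePairing_half_sub_le (α : ℝ) (hf : Integrable f μ) (hg : LipschitzWith C g)
    (hv : ‖v‖ = 1) {t : ℝ} (ht : 0 < t) :
    ‖slopePairing f g μ v (2⁻¹ * t) - slopePairing f g μ v t‖ₑ ≤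
      besovSupSeminorm α f p μ *
        (‖(2⁻¹ * t) • v‖ₑ ^ (-(1 - α)) * lpModulus g q μ ((2⁻¹ * t) • v)) := by
  have hgm : AEStronglyMeasurable g μ := hg.continuous.aestronglyMeasurable
  rw [slopePairing_half_sub hf hg, enorm_neg, enorm_mul]
  have hnorm : ‖(2⁻¹ * t) • v‖ = 2⁻¹ * t := by
    rw [norm_smul, hv, mul_one, Real.norm_of_nonneg (by positivity)]
  generalize (2⁻¹ * t) • v = s at hnorm ⊢
  have hs : s ≠ 0 := norm_pos_iff.1 (hnorm ▸ by positivity)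
  have hinv : ‖t⁻¹‖ₑ ≤ ‖s‖ₑ ^ (-1 : ℝ) := by
    rw [enorm_inv ht.ne', ENNReal.rpow_neg_one, ENNReal.inv_le_inv, enorm_le_iff_norm_le, hnorm,
      Real.norm_of_nonneg ht.le]
    linarith
  have hexp : ‖s‖ₑ ^ (-(1 - α)) = ‖s‖ₑ ^ (-1 : ℝ) * ‖s‖ₑ ^ α := by
    rw [← ENNReal.rpow_add _ _ (enorm_ne_zero.2 hs) (by simp)]
    ring_nf
  calc ‖t⁻¹‖ₑ * ‖∫ x, (f (x + -s) - f x) * (g (x + s) - g x) ∂μ‖ₑ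
    _ ≤ ‖t⁻¹‖ₑ * (lpModulus f p μ (-s) * lpModulus g q μ s) := by
      gcongr
      exact enorm_integral_mul_le_eLpNorm_mul_eLpNorm
        ((aestronglyMeasurable_comp_add_right hf.1 (-s)).sub hf.1)
        ((aestronglyMeasurable_comp_add_right hgm s).sub hgm)
    _ ≤ ‖s‖ₑ ^ (-1 : ℝ) * (‖s‖ₑ ^ α * besovSupSeminorm α f p μ * lpModulus g q μ s) := by
      gcongr
      simpa only [enorm_neg] using
        lpModulus_le_enorm_rpow_mul_besovSupSeminorm α f p μ (neg_ne_zero.2 hs)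
    _ = besovSupSeminorm α f p μ * (‖s‖ₑ ^ (-(1 - α)) * lpModulus g q μ s) := by
      rw [hexp]
      ring

end Increments

section Limit

variable [BorelSpace E] [FiniteDimensional ℝ E] {μ : Measure E} [μ.IsAddHaarMeasure]

lemma tendsto_slopePairing (hf : Integrable f μ) (hg : LipschitzWith C g) (v : E) :
    Tendsto (slopePairing f g μ v) (𝓝[>] 0) (𝓝 (∫ x, f x * lineDeriv ℝ g x v ∂μ)) := by
  convert hg.integral_inv_smul_sub_mul_tendsto_integral_lineDeriv_mul hf v using 2 with t
  · rw [slopePairing, ← integral_const_mul]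
    congr with x
    rw [smul_eq_mul]
    ring
  · simp only [mul_comm]

variable [ENNReal.HolderConjugate p q]

lemma enorm_slopePairing_dyadic_le {α : ℝ} (hα : α ≤ 1) (hf : Integrable f μ)
    (hg : LipschitzWith C g) (hv : ‖v‖ = 1) (n : ℕ) :
    ‖slopePairing f g μ v (2⁻¹ ^ n)‖ₑ ≤ 2 * (eLpNorm f p μ * eLpNorm g q μ) +
      2 * midBallRatio μ * (besovSupSeminorm α f p μ * besovIntSeminorm (1 - α) g q μ) := by
  let D (k : ℕ) : ℝ := slopePairing f g μ v (2⁻¹ ^ k)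
  have hincrement (k : ℕ) : ‖D (k + 1) - D k‖ₑ ≤ besovSupSeminorm α f p μ *
      (‖(2⁻¹ : ℝ) ^ (k + 1) • v‖ₑ ^ (-(1 - α)) *
        lpModulus g q μ ((2⁻¹ : ℝ) ^ (k + 1) • v)) := by
    simp only [D, pow_succ']
    exact enorm_slopePairing_half_sub_le α hf hg hv (by positivity)
  have hsum : ∑' k, ‖D (k + 1) - D k‖ₑ ≤
      2 * midBallRatio μ * (besovSupSeminorm α f p μ * besovIntSeminorm (1 - α) g q μ) := by
    refine (ENNReal.tsum_le_tsum hincrement).trans ?_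
    rw [ENNReal.tsum_mul_left, mul_left_comm]
    gcongr
    exact tsum_dyadic_lpModulus_le_besovIntSeminorm (sub_nonneg.2 hα) hg.continuous
      (ENNReal.HolderConjugate.one_le q p) (norm_ne_zero_iff.1 (hv ▸ one_ne_zero))
  have hinitial : ‖D 0‖ₑ ≤ 2 * (eLpNorm f p μ * eLpNorm g q μ) := by
    simpa only [D, pow_zero] using
      enorm_slopePairing_one_le (p := p) (q := q) hf.1 hg.continuous.aestronglyMeasurable v
  calc ‖D n‖ₑ
    _ = ‖D 0 + ∑ k ∈ Finset.range n, (D (k + 1) - D k)‖ₑ := by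
      rw [Finset.sum_range_sub, add_sub_cancel]
    _ ≤ ‖D 0‖ₑ + ∑ k ∈ Finset.range n, ‖D (k + 1) - D k‖ₑ :=
      (enorm_add_le _ _).trans (add_le_add_right (enorm_sum_le _ _) _)
    _ ≤ _ := add_le_add hinitial ((ENNReal.sum_le_tsum _).trans hsum)

lemma enorm_integral_mul_lineDeriv_le {α : ℝ} (hα : α ≤ 1) (hf : Integrable f μ)
    (hg : LipschitzWith C g) (hv : ‖v‖ = 1) :
    ‖∫ x, f x * lineDeriv ℝ g x v ∂μ‖ₑ ≤ 2 * (eLpNorm f p μ * eLpNorm g q μ) +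
      2 * midBallRatio μ * (besovSupSeminorm α f p μ * besovIntSeminorm (1 - α) g q μ) := by
  have hdyadic : Tendsto (fun n : ℕ => (2⁻¹ : ℝ) ^ n) atTop (𝓝[>] 0) :=
    tendsto_pow_atTop_nhdsWithin_zero_of_lt_one (by norm_num) (by norm_num)
  exact le_of_tendsto ((tendsto_slopePairing hf hg v).comp hdyadic).enorm
    (Eventually.of_forall fun n => enorm_slopePairing_dyadic_le hα hf hg hv n)

end Limit

end SlopePairing

theorem statement5_general {E : Type*} [NormedAddCommGroup E] [NormedSpace ℝ E]
    [MeasurableSpace E] [BorelSpace E] [FiniteDimensional ℝ E] (μ : Measure E)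
    [μ.IsAddHaarMeasure] :
    ∃ C : ℝ≥0, 0 < C ∧ ∀ α ≤ (1 : ℝ), ∀ p q : ℝ≥0∞, p⁻¹ + q⁻¹ = 1 →
      ∀ f g : E → ℝ, Integrable f μ → (∃ K, LipschitzWith K g) → ∀ v : E, ‖v‖ = 1 →
        ‖∫ x, f x * lineDeriv ℝ g x v ∂μ‖ₑ ≤
          C * ((eLpNorm f p μ + besovSupSeminorm α f p μ) *
            (eLpNorm g q μ + besovIntSeminorm (1 - α) g q μ)) := by
  have hC : 2 + 2 * midBallRatio μ ≠ ⊤ := by finiteness [midBallRatio_ne_top μ]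
  refine ⟨(2 + 2 * midBallRatio μ).toNNReal, ENNReal.toNNReal_pos (by simp) hC, ?_⟩
  rintro α hα p q hpq f g hf ⟨K, hg⟩ v hv
  have : ENNReal.HolderConjugate p q := ENNReal.holderConjugate_iff.2 hpq
  rw [ENNReal.coe_toNNReal hC, add_mul]
  exact (enorm_integral_mul_lineDeriv_le (p := p) (q := q) hα hf hg hv).trans <| add_le_add
    (mul_le_mul' le_rfl (mul_le_mul' le_self_add le_self_add))
    (mul_le_mul' le_rfl (mul_le_mul' le_add_self le_add_self))

/-! ## STATEMENT 5 -/


theorem statement5 (α : ℝ) (hα : α ∈ Set.Ioo (0:ℝ) 1)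
    (p q : ℝ≥0∞) (hp : 1 ≤ p) (hq : 1 ≤ q) (hpq : p⁻¹ + q⁻¹ = 1) :
    ∃ C : ℝ≥0, 0 < C ∧
    ∀ f g : ℂ → ℝ, ContDiff ℝ (⊤ : ℕ∞) f → HasCompactSupport f →
      ContDiff ℝ (⊤ : ℕ∞) g → HasCompactSupport g →
    ∀ v : ℂ, (v = 1 ∨ v = Complex.I) →
      ENNReal.ofReal |∫ x, f x * fderiv ℝ g x v|
        ≤ (C : ℝ≥0∞) *
          ((eLpNorm f p volume +
              ⨆ h : {h : ℂ // h ≠ 0}, (‖h.1‖₊ : ℝ≥0∞) ^ (-α) *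
                eLpNorm (fun x => f (x + h.1) - f x) p volume) *
            (eLpNorm g q volume +
              ∫⁻ h : ℂ, (‖h‖₊ : ℝ≥0∞) ^ (-(1-α)) *
                eLpNorm (fun x => g (x + h) - g x) q volume * (‖h‖₊ : ℝ≥0∞) ^ (-(2:ℝ)))) := by
  obtain ⟨C, hC, hbound⟩ := statement5_general (volume : Measure ℂ)
  refine ⟨C, hC, fun f g hf hfc hg hgc v hv => ?_⟩
  have hderiv (x : ℂ) : lineDeriv ℝ g x v = fderiv ℝ g x v :=
    (hg.differentiable (by simp) x).lineDeriv_eq_fderiv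
  have hvnorm : ‖v‖ = 1 := by rcases hv with rfl | rfl <;> simp
  rw [← Real.enorm_eq_ofReal_abs]
  simpa only [hderiv, besovSupSeminorm, besovIntSeminorm, lpModulus,
    enorm_eq_nnnorm, Complex.finrank_real_complex, Nat.cast_ofNat] using
    hbound α hα.2.le p q hpq f g (hf.continuous.integrable_of_hasCompactSupport hfc)
      (hg.lipschitzWith_of_hasCompactSupport hgc (by simp)) v hvnorm

end Eikonal
end
end

section
/- Let Ω ⊂ ℝ² be a bounded open set, α ∈ (0,1), and m : Ω → S¹ measurable with div m = 0 in the sense of distributions and m ∈ B^{1/(2+α)}_{2+α,∞}(Ω). Then there is C = C(α) > 0 such that for every Φ ∈ ENT with ‖Φ‖_{C^{1,α}} ≤ 1, every open U ⊂ Ω and every ζ ∈ C_c¹(U) with ‖ζ‖_∞ ≤ 1: |∫_U Φ(m)·∇ζ dx| ≤ C · liminf_{ε→0} ε^{−1} ⨍_{B_{2ε}} (∫_{U ∩ (Ω−h)} |m(x+h) − m(x)|^{2+α} dx) dh. -/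
open MeasureTheory Metric Filter Set Bornology
open scoped ENNReal NNReal Topology Real

noncomputable section

namespace Eikonal

/-! ## STATEMENT 6 -/

/-!
Let `M = k ⋆ m` be a mollification of `m` at scale `r`, put `b = Φ + (i/2) Φ'` and
`N = k ⋆ (b ∘ m)`, and extend `Φ` to the plane by `Ψ(z) = |z|² Φ(z / |z|)`. The field
`Y = Ψ(M) + (1 - |M|²) N` approximates `Φ(m)`, and since `tr DM = 0` and `Φ'(e^{iθ}) ⟂ e^{iθ}`,
its divergence is `2 ⟨M, DM (b(M) - N)⟩ + (1 - |M|²) div N`. As `|m| = 1`, both `⟨M, DM ·⟩` and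
`1 - |M|²` are quadratic in the mean oscillation `s` of `m` at scale `r`, while `b` is `α`-Hölder,
so `|div Y| ≲ s^{2+α} / r`. Integrating `Y` by parts against `ζ` and letting `r → 0` along a
sequence that realizes the lower limit gives the estimate; along it `∫ |Y - Φ(m)| ≲ ∫ s` tends to
zero.
-/

section

open ContinuousLinearMap (lsmul)
open scoped Convolution RealInnerProductSpace

/-! ### Kernels at scale `r` -/

lemma setAverage_rpow_le_rpow_setAverage {X : Type*} [MeasurableSpace X] {μ : Measure X}
    {s : Set X} {g : X → ℝ} {p q : ℝ} (hs₀ : μ s ≠ 0) (hs : μ s ≠ ∞) (hq : 0 < q) (hqp : q ≤ p)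
    (hg : ∀ x, 0 ≤ g x) (hgq : IntegrableOn (fun x => g x ^ q) s μ)
    (hgp : IntegrableOn (fun x => g x ^ p) s μ) :
    ⨍ x in s, g x ^ q ∂μ ≤ (⨍ x in s, g x ^ p ∂μ) ^ (q / p) := by
  have hp : 0 < p := hq.trans_le hqp
  have hpow : ∀ x, (g x ^ q) ^ (p / q) = g x ^ p := fun x => by
    rw [← Real.rpow_mul (hg x), mul_div_cancel₀ p hq.ne']
  have havg : 0 ≤ ⨍ x in s, g x ^ q ∂μ := by
    rw [setAverage_eq]
    exact smul_nonneg (by positivity) (integral_nonneg fun x => Real.rpow_nonneg (hg x) q)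
  have hjensen : (⨍ x in s, g x ^ q ∂μ) ^ (p / q) ≤ ⨍ x in s, (g x ^ q) ^ (p / q) ∂μ :=
    (convexOn_rpow ((one_le_div hq).2 hqp)).map_set_average_le
      (Real.continuous_rpow_const (by positivity)).continuousOn isClosed_Ici hs₀ hs
      (.of_forall fun x => Real.rpow_nonneg (hg x) q) hgq
      (by simpa only [Function.comp_def, hpow] using hgp)
  simp only [hpow] at hjensen
  have := Real.rpow_le_rpow (Real.rpow_nonneg havg _) hjensen (div_nonneg hq.le hp.le)
  rwa [← Real.rpow_mul havg, div_mul_div_cancel₀ hq.ne', div_self hp.ne', Real.rpow_one] at this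

variable {E : Type*} [NormedAddCommGroup E] [MeasurableSpace E] {μ : Measure E}
  {V : Type*} [NormedAddCommGroup V]

lemma measureReal_ball_pos (μ : Measure E) [ProperSpace E] [IsFiniteMeasureOnCompacts μ]
    [μ.IsOpenPosMeasure] (x : E) {r : ℝ} (hr : 0 < r) : 0 < μ.real (ball x r) :=
  ENNReal.toReal_pos (measure_ball_pos μ x hr).ne' measure_ball_lt_top.ne

lemma locallyIntegrable_of_norm_le [IsLocallyFiniteMeasure μ] {B : ℝ} {F : E → V}
    (hF : StronglyMeasurable F) (hB : ∀ x, ‖F x‖ ≤ B) : LocallyIntegrable F μ :=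
  (memLp_top_of_bound hF.aestronglyMeasurable B (.of_forall hB)).locallyIntegrable le_top

/-- A continuous convolution kernel of size `A` at scale `r`: it vanishes off `B_r` and is bounded
by `A / |B_r|`, so that convolving with it costs at most `A` times an average over `B_r`. -/
structure IsKernel (μ : Measure E) (A r : ℝ) (κ : E → ℝ) : Prop where
  continuous : Continuous κ
  eq_zero : ∀ t ∉ ball 0 r, κ t = 0
  abs_le : ∀ t, |κ t| ≤ A / μ.real (ball 0 r)

namespace IsKernel

variable {A r : ℝ} {κ : E → ℝ}

lemma norm_integral_smul_le [OpensMeasurableSpace E] [NormedSpace ℝ V] (hκ : IsKernel μ A r κ)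
    {F : E → V} {g : E → ℝ} (hF : ∀ t, ‖F t‖ ≤ g t) (hg : IntegrableOn g (ball 0 r) μ) :
    ‖∫ t, κ t • F t ∂μ‖ ≤ A * ⨍ t in ball 0 r, g t ∂μ := by
  have hbound : ∀ t,
      ‖κ t • F t‖ ≤ (ball 0 r).indicator (fun t => A / μ.real (ball 0 r) * g t) t := fun t => by
    by_cases ht : t ∈ ball 0 r
    · rw [indicator_of_mem ht, norm_smul]
      exact mul_le_mul (hκ.abs_le t) (hF t) (norm_nonneg _) ((abs_nonneg _).trans (hκ.abs_le t))
    · simp [indicator_of_notMem ht, hκ.eq_zero t ht]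
  calc ‖∫ t, κ t • F t ∂μ‖
      ≤ ∫ t, (ball 0 r).indicator (fun t => A / μ.real (ball 0 r) * g t) t ∂μ :=
        norm_integral_le_of_norm_le
          (IntegrableOn.integrable_indicator (hg.const_mul _) measurableSet_ball)
          (.of_forall hbound)
    _ = A * ⨍ t in ball 0 r, g t ∂μ := by
        rw [integral_indicator measurableSet_ball, integral_const_mul, setAverage_eq, smul_eq_mul]
        ring

lemma hasCompactSupport [ProperSpace E] (hκ : IsKernel μ A r κ) : HasCompactSupport κ :=
  .of_support_subset_isCompact (isCompact_closedBall 0 r) fun t ht =>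
    ball_subset_closedBall (not_not.1 fun h => ht (hκ.eq_zero t h))

lemma nonneg (hκ : IsKernel μ A r κ) (hμ : 0 < μ.real (ball 0 r)) : 0 ≤ A := by
  simpa using (le_div_iff₀ hμ).1 ((abs_nonneg _).trans (hκ.abs_le 0))

end IsKernel

section Convolution

variable [NormedSpace ℝ E] [BorelSpace E] [FiniteDimensional ℝ E] [μ.IsAddHaarMeasure]
  [NormedSpace ℝ V]

lemma integrable_smul_comp_sub_left {κ : E → ℝ} (hκ : Continuous κ) (hκ' : HasCompactSupport κ)
    {F : E → V} (hF : LocallyIntegrable F μ) (x : E) : Integrable (fun t => κ t • F (x - t)) μ :=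
  hκ'.convolutionExists_left (lsmul ℝ ℝ) hκ hF x

lemma integral_smul_sub_const [CompleteSpace V] {κ : E → ℝ} (hκ : Continuous κ)
    (hκ' : HasCompactSupport κ) {F : E → V} (hF : LocallyIntegrable F μ) (x : E) (c : V) :
    ∫ t, κ t • (F (x - t) - c) ∂μ = (κ ⋆[lsmul ℝ ℝ, μ] F) x - (∫ t, κ t ∂μ) • c := by
  simp only [smul_sub]
  rw [integral_sub (integrable_smul_comp_sub_left hκ hκ' hF x)
    ((hκ.integrable_of_hasCompactSupport hκ').smul_const c), integral_smul_const]
  simp only [convolution_def, ContinuousLinearMap.lsmul_apply]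

lemma fderiv_convolution_lsmul_apply {k : E → ℝ} (hk : ContDiff ℝ 1 k) (hk' : HasCompactSupport k)
    {F : E → V} (hF : LocallyIntegrable F μ) (x v : E) :
    fderiv ℝ (k ⋆[lsmul ℝ ℝ, μ] F) x v
      = ((fun t => fderiv ℝ k t v) ⋆[lsmul ℝ ℝ, μ] F) x := by
  have hint := (hk'.fderiv ℝ).convolutionExists_left (lsmul ℝ ℝ |>.precompL E)
    (hk.continuous_fderiv one_ne_zero) hF x
  rw [(hk'.hasFDerivAt_convolution_left (lsmul ℝ ℝ) hk hF x).fderiv, convolution_def,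
    ContinuousLinearMap.integral_apply hint]
  simp only [convolution_def, ContinuousLinearMap.precompL_apply]

lemma differentiable_convolution_lsmul {k : E → ℝ} (hk : ContDiff ℝ 1 k)
    (hk' : HasCompactSupport k) {F : E → V} (hF : LocallyIntegrable F μ) :
    Differentiable ℝ (k ⋆[lsmul ℝ ℝ, μ] F) := fun x =>
  (hk'.hasFDerivAt_convolution_left (lsmul ℝ ℝ) hk hF x).differentiableAt

lemma trace_fderiv_convolution_lsmul {k : E → ℝ} (hk : ContDiff ℝ 1 k)
    (hk' : HasCompactSupport k) {F : E → E} (hF : LocallyIntegrable F μ) (x : E) :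
    LinearMap.trace ℝ E (fderiv ℝ (k ⋆[lsmul ℝ ℝ, μ] F) x)
      = ∫ t, fderiv ℝ k t (F (x - t)) ∂μ := by
  let traceCLM : (E →L[ℝ] E) →L[ℝ] ℝ :=
    LinearMap.toContinuousLinearMap (LinearMap.trace ℝ E ∘ₗ ContinuousLinearMap.coeLM ℝ)
  have hint := (hk'.fderiv ℝ).convolutionExists_left (lsmul ℝ ℝ |>.precompL E)
    (hk.continuous_fderiv one_ne_zero) hF x
  rw [(hk'.hasFDerivAt_convolution_left (lsmul ℝ ℝ) hk hF x).fderiv, convolution_def]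
  refine (traceCLM.integral_comp_comm hint).symm.trans (integral_congr_ae (.of_forall fun t => ?_))
  exact LinearMap.trace_smulRight (fderiv ℝ k t : E →ₗ[ℝ] ℝ) (F (x - t))

end Convolution

/-- A smooth mollifier at scale `r`: a probability density supported in the open ball `B_r` whose
values are at most `K / |B_r|` and whose slopes are at most `(K / r) / |B_r|`. -/
structure IsMollifier [NormedSpace ℝ E] (μ : Measure E) (K r : ℝ) (k : E → ℝ) : Prop where
  contDiff : ContDiff ℝ (⊤ : ℕ∞) k
  tsupport_subset : tsupport k ⊆ ball 0 r
  nonneg : ∀ t, 0 ≤ k t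
  le : ∀ t, k t ≤ K / μ.real (ball 0 r)
  norm_fderiv_le : ∀ t, ‖fderiv ℝ k t‖ ≤ K / r / μ.real (ball 0 r)
  integral_eq_one : ∫ t, k t ∂μ = 1

namespace IsMollifier

variable [NormedSpace ℝ E] {K r : ℝ} {k : E → ℝ}

lemma contDiff_one (hk : IsMollifier μ K r k) : ContDiff ℝ 1 k :=
  hk.contDiff.of_le (by exact_mod_cast le_top)

lemma isKernel (hk : IsMollifier μ K r k) : IsKernel μ K r k where
  continuous := hk.contDiff.continuous
  eq_zero _ ht := image_eq_zero_of_notMem_tsupport fun h => ht (hk.tsupport_subset h)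
  abs_le t := (abs_of_nonneg (hk.nonneg t)).trans_le (hk.le t)

lemma isKernel_fderiv_apply (hk : IsMollifier μ K r k) (v : E) :
    IsKernel μ (K / r * ‖v‖) r (fun t => fderiv ℝ k t v) where
  continuous := (hk.contDiff_one.continuous_fderiv one_ne_zero).clm_apply continuous_const
  eq_zero t ht := by
    have : t ∉ tsupport (fderiv ℝ k) := fun h =>
      ht (hk.tsupport_subset (tsupport_fderiv_subset ℝ h))
    simp [image_eq_zero_of_notMem_tsupport this]
  abs_le t := by
    calc |fderiv ℝ k t v| ≤ ‖fderiv ℝ k t‖ * ‖v‖ := (fderiv ℝ k t).le_opNorm v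
      _ ≤ K / r / μ.real (ball 0 r) * ‖v‖ := by gcongr; exact hk.norm_fderiv_le t
      _ = K / r * ‖v‖ / μ.real (ball 0 r) := by ring

lemma radius_pos (hk : IsMollifier μ K r k) : 0 < r := by
  by_contra! hr
  have hzero : k = 0 := funext fun t =>
    hk.isKernel.eq_zero t (by simp [ball_eq_empty.2 hr])
  simpa [hzero] using hk.integral_eq_one

variable [BorelSpace E] [FiniteDimensional ℝ E] [μ.IsAddHaarMeasure]

lemma one_le (hk : IsMollifier μ K r k) : 1 ≤ K := by
  calc (1 : ℝ) = ‖∫ t, k t • (1 : ℝ) ∂μ‖ := by simp [hk.integral_eq_one]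
    _ ≤ K * ⨍ _ in ball (0 : E) r, (1 : ℝ) ∂μ :=
        hk.isKernel.norm_integral_smul_le (fun _ => norm_one.le)
          (integrableOn_const measure_ball_lt_top.ne)
    _ = K := by
        rw [setAverage_const (measure_ball_pos μ 0 hk.radius_pos).ne' measure_ball_lt_top.ne,
          mul_one]

lemma integral_fderiv_apply_eq_zero (hk : IsMollifier μ K r k) (v : E) :
    ∫ t, fderiv ℝ k t v ∂μ = 0 := by
  have hcpt := hk.isKernel.hasCompactSupport
  have hDk := hk.isKernel_fderiv_apply v
  simpa using integral_mul_fderiv_eq_neg_fderiv_mul_of_integrable (μ := μ) (f := fun _ => (1 : ℝ))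
    (g := k) (v := v) (by simp)
    (by simpa using hDk.continuous.integrable_of_hasCompactSupport hDk.hasCompactSupport)
    (by simpa using hk.isKernel.continuous.integrable_of_hasCompactSupport hcpt)
    (fun _ _ => differentiableAt_const _)
    (fun t _ => (hk.contDiff_one.differentiable one_ne_zero).differentiableAt)

lemma rescale {ρ : E → ℝ} (hρ : IsMollifier μ K 1 ρ) (hr : 0 < r) :
    IsMollifier μ K r fun t => (r ^ Module.finrank ℝ E)⁻¹ * ρ (r⁻¹ • t) := by
  set d := Module.finrank ℝ E
  have hball : μ.real (ball 0 r) = r ^ d * μ.real (ball 0 1) := by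
    rw [measureReal_def, Measure.addHaar_ball_of_pos μ 0 hr, ENNReal.toReal_mul,
      ENNReal.toReal_ofReal (by positivity), measureReal_def]
  have hdiff : Differentiable ℝ ρ := hρ.contDiff_one.differentiable one_ne_zero
  have hderiv : ∀ t, fderiv ℝ (fun t => (r ^ d)⁻¹ * ρ (r⁻¹ • t)) t
      = ((r ^ d)⁻¹ * r⁻¹) • fderiv ℝ ρ (r⁻¹ • t) := fun t => by
    rw [fderiv_const_mul
      (hdiff.fun_comp (differentiable_fun_id.fun_const_smul r⁻¹)).differentiableAt,
      fderiv_comp_smul, smul_smul]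
  refine ⟨contDiff_const.mul (hρ.contDiff.comp (contDiff_const_smul r⁻¹)), fun t ht => ?_,
    fun t => mul_nonneg (by positivity) (hρ.nonneg _), fun t => ?_, fun t => ?_, ?_⟩
  · have : r⁻¹ • t ∈ ball 0 1 :=
      hρ.tsupport_subset (tsupport_comp_subset_preimage ρ (continuous_const_smul r⁻¹)
        (tsupport_mul_subset_right ht))
    rw [mem_ball_zero_iff, norm_smul, norm_inv, Real.norm_of_nonneg hr.le] at this
    simpa using (inv_mul_lt_iff₀ hr).1 this
  · calc (r ^ d)⁻¹ * ρ (r⁻¹ • t) ≤ (r ^ d)⁻¹ * (K / μ.real (ball 0 1)) := by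
          gcongr; exact hρ.le _
      _ = K / μ.real (ball 0 r) := by rw [hball]; field_simp
  · rw [hderiv, norm_smul, Real.norm_of_nonneg (by positivity)]
    calc (r ^ d)⁻¹ * r⁻¹ * ‖fderiv ℝ ρ (r⁻¹ • t)‖
        ≤ (r ^ d)⁻¹ * r⁻¹ * (K / 1 / μ.real (ball 0 1)) := by
          gcongr; exact hρ.norm_fderiv_le _
      _ = K / r / μ.real (ball 0 r) := by rw [hball]; field_simp
  · rw [integral_const_mul, Measure.integral_comp_inv_smul_of_nonneg μ ρ hr.le,
      hρ.integral_eq_one]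
    simp [hr.ne', d]

end IsMollifier

variable (μ) in
theorem exists_isMollifier [NormedSpace ℝ E] [BorelSpace E] [FiniteDimensional ℝ E]
    [μ.IsAddHaarMeasure] : ∃ K, ∀ r > 0, ∃ k, IsMollifier μ K r k := by
  let ρ := (⟨1 / 4, 1 / 2, by norm_num, by norm_num⟩ : ContDiffBump (0 : E))
  have hsupp : HasCompactSupport (ρ.normed μ) := ρ.hasCompactSupport_normed
  have hρ : ContDiff ℝ (⊤ : ℕ∞) (ρ.normed μ) := ρ.contDiff_normed
  have hμ : 0 < μ.real (ball (0 : E) 1) := measureReal_ball_pos μ 0 one_pos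
  obtain ⟨A, hA⟩ := hρ.continuous.bounded_above_of_compact_support hsupp
  obtain ⟨B, hB⟩ := (hρ.continuous_fderiv (by simp)).bounded_above_of_compact_support
    (hsupp.fderiv ℝ)
  have hmoll : IsMollifier μ (max A B * μ.real (ball 0 1)) 1 (ρ.normed μ) :=
    { contDiff := hρ
      tsupport_subset := by
        rw [ρ.tsupport_normed_eq]
        exact closedBall_subset_ball (by norm_num [ρ])
      nonneg := ρ.nonneg_normed
      le := fun t => by
        rw [mul_div_cancel_right₀ _ hμ.ne']
        exact (le_abs_self _).trans ((hA t).trans (le_max_left _ _))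
      norm_fderiv_le := fun t => by
        rw [div_one, mul_div_cancel_right₀ _ hμ.ne']
        exact (hB t).trans (le_max_right _ _)
      integral_eq_one := ρ.integral_normed }
  exact ⟨_, fun r hr => ⟨_, hmoll.rescale hr⟩⟩

/-! ### Mean oscillation and mollification -/

lemma abs_inner_sub_of_norm_eq {H : Type*} [NormedAddCommGroup H] [InnerProductSpace ℝ H]
    {a c : H} (h : ‖a‖ = ‖c‖) : |⟪c, a - c⟫| = ‖a - c‖ ^ 2 / 2 := by
  have hexpand := norm_add_sq_real c (a - c)
  rw [add_sub_cancel, h] at hexpand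
  have hinner : ⟪c, a - c⟫ = -(‖a - c‖ ^ 2 / 2) := by linarith
  rw [hinner, abs_neg, abs_of_nonneg (by positivity)]

lemma norm_sub_rpow_le {X : Type*} {m : X → V} {B q : ℝ} (hB : ∀ x, ‖m x‖ ≤ B) (hq : 0 ≤ q)
    (x y : X) : ‖m y - m x‖ ^ q ≤ (2 * B) ^ q := by
  gcongr
  linarith [norm_sub_le (m y) (m x), hB x, hB y]

/-- The `L^p` mean oscillation `(⨍_{B_r} |m(x - t) - m(x)|^p dt)^{1/p}` of `m` at scale `r`.
All errors in the commutator estimate are powers of it. -/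
def meanOsc (μ : Measure E) (p r : ℝ) (m : E → V) (x : E) : ℝ :=
  (⨍ t in ball 0 r, ‖m (x - t) - m x‖ ^ p ∂μ) ^ p⁻¹

section MeanOsc

variable {p q r B : ℝ} {m : E → V}

lemma setAverage_norm_sub_rpow_nonneg (μ : Measure E) (p r : ℝ) (m : E → V) (x : E) :
    0 ≤ ⨍ t in ball 0 r, ‖m (x - t) - m x‖ ^ p ∂μ := by
  rw [setAverage_eq]
  exact smul_nonneg (by positivity) (integral_nonneg fun t => by positivity)

lemma meanOsc_nonneg (μ : Measure E) (p r : ℝ) (m : E → V) (x : E) : 0 ≤ meanOsc μ p r m x :=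
  Real.rpow_nonneg (setAverage_norm_sub_rpow_nonneg μ p r m x) _

lemma meanOsc_rpow (hp : p ≠ 0) (m : E → V) (x : E) :
    meanOsc μ p r m x ^ p = ⨍ t in ball 0 r, ‖m (x - t) - m x‖ ^ p ∂μ :=
  Real.rpow_inv_rpow (setAverage_norm_sub_rpow_nonneg μ p r m x) hp

variable [NormedSpace ℝ E] [BorelSpace E] [FiniteDimensional ℝ E] [μ.IsAddHaarMeasure]

lemma integrableOn_ball_norm_sub_rpow (hm : StronglyMeasurable m) (hB : ∀ x, ‖m x‖ ≤ B)
    (hq : 0 ≤ q) (x : E) (r : ℝ) :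
    IntegrableOn (fun t => ‖m (x - t) - m x‖ ^ q) (ball 0 r) μ := by
  have hmeas : StronglyMeasurable fun t => m (x - t) - m x :=
    (hm.comp_measurable (measurable_const.sub measurable_id)).sub stronglyMeasurable_const
  refine .of_bound measure_ball_lt_top
    (hmeas.norm.measurable.pow_const q).aestronglyMeasurable ((2 * B) ^ q) (.of_forall fun t => ?_)
  rw [Real.norm_of_nonneg (by positivity)]
  exact norm_sub_rpow_le hB hq x (x - t)

lemma setAverage_norm_sub_rpow_le_meanOsc_rpow (hm : StronglyMeasurable m)
    (hB : ∀ x, ‖m x‖ ≤ B) (hr : 0 < r) (hq : 0 < q) (hqp : q ≤ p) (x : E) :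
    ⨍ t in ball 0 r, ‖m (x - t) - m x‖ ^ q ∂μ ≤ meanOsc μ p r m x ^ q := by
  rw [meanOsc, ← Real.rpow_mul (setAverage_norm_sub_rpow_nonneg μ p r m x), inv_mul_eq_div]
  exact setAverage_rpow_le_rpow_setAverage (measure_ball_pos μ 0 hr).ne' measure_ball_lt_top.ne hq
    hqp (fun t => norm_nonneg _) (integrableOn_ball_norm_sub_rpow hm hB hq.le x r)
    (integrableOn_ball_norm_sub_rpow hm hB (hq.le.trans hqp) x r)

lemma measurable_meanOsc (μ : Measure E) [μ.IsAddHaarMeasure] (p r : ℝ)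
    (hm : StronglyMeasurable m) : Measurable (meanOsc μ p r m) := by
  have hincr : StronglyMeasurable fun z : E × E => m (z.1 - z.2) - m z.1 :=
    (hm.comp_measurable (measurable_fst.sub measurable_snd)).sub
      (hm.comp_measurable measurable_fst)
  have havg := ((hincr.norm.measurable.pow_const p).stronglyMeasurable.integral_prod_right'
    (ν := μ.restrict (ball 0 r))).measurable.const_smul (μ.real (ball 0 r))⁻¹
  unfold meanOsc
  simp only [setAverage_eq]
  exact havg.pow_const p⁻¹

lemma meanOsc_le (hm : StronglyMeasurable m) (hB : ∀ x, ‖m x‖ ≤ B) (hr : 0 < r) (hp : 0 < p)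
    (x : E) : meanOsc μ p r m x ≤ 2 * B := by
  have hB₀ : 0 ≤ B := (norm_nonneg _).trans (hB x)
  have hμ : 0 < μ.real (ball (0 : E) r) := measureReal_ball_pos μ 0 hr
  rw [← Real.rpow_le_rpow_iff (meanOsc_nonneg μ p r m x) (by positivity) hp, meanOsc_rpow hp.ne',
    setAverage_eq, smul_eq_mul, inv_mul_le_iff₀ hμ]
  calc ∫ t in ball 0 r, ‖m (x - t) - m x‖ ^ p ∂μ
      ≤ ∫ _ in ball (0 : E) r, (2 * B) ^ p ∂μ :=
        integral_mono (integrableOn_ball_norm_sub_rpow hm hB hp.le x r)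
          (integrableOn_const measure_ball_lt_top.ne) fun t => norm_sub_rpow_le hB hp.le x (x - t)
    _ = μ.real (ball 0 r) * (2 * B) ^ p := by simp

lemma integrableOn_meanOsc_rpow (hm : StronglyMeasurable m) (hB : ∀ x, ‖m x‖ ≤ B) (hr : 0 < r)
    (hp : 0 < p) (hq : 0 ≤ q) {S : Set E} (hS : μ S < ∞) :
    IntegrableOn (fun x => meanOsc μ p r m x ^ q) S μ := by
  refine .of_bound hS
    ((measurable_meanOsc μ p r hm).pow_const q).aestronglyMeasurable
    ((2 * B) ^ q) (.of_forall fun x => ?_)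
  rw [Real.norm_of_nonneg (Real.rpow_nonneg (meanOsc_nonneg μ p r m x) q)]
  exact Real.rpow_le_rpow (meanOsc_nonneg μ p r m x) (meanOsc_le hm hB hr hp x) hq

end MeanOsc

namespace IsKernel

variable [NormedSpace ℝ E] [BorelSpace E] [FiniteDimensional ℝ E] [μ.IsAddHaarMeasure]
  {A B p q r : ℝ} {κ : E → ℝ}

lemma norm_integral_smul_le_meanOsc_rpow {W : Type*} [NormedAddCommGroup W] [NormedSpace ℝ W]
    {m : E → V} {F : E → W} {C : ℝ} (hκ : IsKernel μ A r κ) (hr : 0 < r)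
    (hm : StronglyMeasurable m) (hB : ∀ x, ‖m x‖ ≤ B) (hq : 0 < q) (hqp : q ≤ p) (hC : 0 ≤ C)
    (x : E) (hF : ∀ t, ‖F t‖ ≤ C * ‖m (x - t) - m x‖ ^ q) :
    ‖∫ t, κ t • F t ∂μ‖ ≤ A * C * meanOsc μ p r m x ^ q := by
  have hA : 0 ≤ A := hκ.nonneg (measureReal_ball_pos μ 0 hr)
  have hint := integrableOn_ball_norm_sub_rpow (μ := μ) hm hB hq.le x r
  calc ‖∫ t, κ t • F t ∂μ‖
      ≤ A * ⨍ t in ball 0 r, C * ‖m (x - t) - m x‖ ^ q ∂μ :=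
        hκ.norm_integral_smul_le hF (hint.const_mul C)
    _ = A * C * ⨍ t in ball 0 r, ‖m (x - t) - m x‖ ^ q ∂μ := by
        simp only [setAverage_eq, integral_const_mul, smul_eq_mul]; ring
    _ ≤ A * C * meanOsc μ p r m x ^ q := by
        gcongr; exact setAverage_norm_sub_rpow_le_meanOsc_rpow hm hB hr hq hqp x

-- Since `m` takes values in a sphere, increments are tangential to first order.
lemma abs_inner_integral_smul_sub_le {H : Type*} [NormedAddCommGroup H] [InnerProductSpace ℝ H]
    [CompleteSpace H] {m : E → H} (hκ : IsKernel μ A r κ) (hr : 0 < r)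
    (hm : StronglyMeasurable m) (hB : ∀ x, ‖m x‖ = B) (hp : 2 ≤ p) (x : E) :
    |⟪m x, ∫ t, κ t • (m (x - t) - m x) ∂μ⟫| ≤ A / 2 * meanOsc μ p r m x ^ 2 := by
  have hloc : LocallyIntegrable m μ := locallyIntegrable_of_norm_le hm fun x => (hB x).le
  have hint : Integrable (fun t => κ t • (m (x - t) - m x)) μ :=
    integrable_smul_comp_sub_left hκ.continuous hκ.hasCompactSupport
      (hloc.sub (locallyIntegrable_const (m x))) x
  have hle := hκ.norm_integral_smul_le_meanOsc_rpow (p := p) (q := 2) (C := 1 / 2)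
    (F := fun t => ⟪m x, m (x - t) - m x⟫) hr hm (fun x => (hB x).le) two_pos hp (by norm_num) x
    fun t => by
      rw [Real.norm_eq_abs, abs_inner_sub_of_norm_eq ((hB _).trans (hB x).symm), Real.rpow_two]
      linarith
  rw [← integral_inner hint]
  simp only [real_inner_smul_right]
  simpa [Real.rpow_two, div_eq_mul_inv] using hle

end IsKernel

namespace IsMollifier

variable [NormedSpace ℝ E] [BorelSpace E] [FiniteDimensional ℝ E] [μ.IsAddHaarMeasure]
  {K r : ℝ} {k : E → ℝ}

section Convolution

variable [NormedSpace ℝ V] {F : E → V}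

lemma convolution_sub_eq [CompleteSpace V] (hk : IsMollifier μ K r k)
    (hF : LocallyIntegrable F μ) (x : E) (c : V) :
    (k ⋆[lsmul ℝ ℝ, μ] F) x - c = ∫ t, k t • (F (x - t) - c) ∂μ := by
  rw [integral_smul_sub_const hk.isKernel.continuous hk.isKernel.hasCompactSupport hF,
    hk.integral_eq_one, one_smul]

lemma fderiv_convolution_apply_eq [CompleteSpace V] (hk : IsMollifier μ K r k)
    (hF : LocallyIntegrable F μ) (x v : E) (c : V) : fderiv ℝ (k ⋆[lsmul ℝ ℝ, μ] F) x v
      = ∫ t, fderiv ℝ k t v • (F (x - t) - c) ∂μ := by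
  have hDk := hk.isKernel_fderiv_apply v
  rw [integral_smul_sub_const hDk.continuous hDk.hasCompactSupport hF,
    hk.integral_fderiv_apply_eq_zero, zero_smul, sub_zero,
    fderiv_convolution_lsmul_apply hk.contDiff_one hk.isKernel.hasCompactSupport hF]

lemma differentiable_convolution (hk : IsMollifier μ K r k) (hF : LocallyIntegrable F μ) :
    Differentiable ℝ (k ⋆[lsmul ℝ ℝ, μ] F) :=
  differentiable_convolution_lsmul hk.contDiff_one hk.isKernel.hasCompactSupport hF

lemma norm_convolution_le {B : ℝ} (hk : IsMollifier μ K r k) (hF : ∀ x, ‖F x‖ ≤ B) (x : E) :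
    ‖(k ⋆[lsmul ℝ ℝ, μ] F) x‖ ≤ B := by
  have hint : Integrable k μ :=
    hk.isKernel.continuous.integrable_of_hasCompactSupport hk.isKernel.hasCompactSupport
  calc ‖(k ⋆[lsmul ℝ ℝ, μ] F) x‖ ≤ ∫ t, k t * B ∂μ :=
        norm_integral_le_of_norm_le (hint.mul_const B) (.of_forall fun t => by
          rw [ContinuousLinearMap.lsmul_apply, norm_smul, Real.norm_of_nonneg (hk.nonneg t)]
          exact mul_le_mul_of_nonneg_left (hF _) (hk.nonneg t))
    _ = B := by rw [integral_mul_const, hk.integral_eq_one, one_mul]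

end Convolution

section Holder

variable [NormedSpace ℝ V] [CompleteSpace V] {W : Type*} [NormedAddCommGroup W]
  {F : E → V} {m : E → W} {B C p q : ℝ}

lemma norm_convolution_sub_le (hk : IsMollifier μ K r k) (hm : StronglyMeasurable m)
    (hB : ∀ x, ‖m x‖ ≤ B) (hF : LocallyIntegrable F μ) (hq : 0 < q) (hqp : q ≤ p) (hC : 0 ≤ C)
    (x : E) (hFm : ∀ y, ‖F y - F x‖ ≤ C * ‖m y - m x‖ ^ q) :
    ‖(k ⋆[lsmul ℝ ℝ, μ] F) x - F x‖ ≤ K * C * meanOsc μ p r m x ^ q := by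
  rw [hk.convolution_sub_eq hF]
  exact hk.isKernel.norm_integral_smul_le_meanOsc_rpow hk.radius_pos hm hB hq hqp hC x
    fun t => hFm (x - t)

lemma norm_fderiv_convolution_apply_le (hk : IsMollifier μ K r k) (hm : StronglyMeasurable m)
    (hB : ∀ x, ‖m x‖ ≤ B) (hF : LocallyIntegrable F μ) (hq : 0 < q) (hqp : q ≤ p) (hC : 0 ≤ C)
    (x v : E) (hFm : ∀ y, ‖F y - F x‖ ≤ C * ‖m y - m x‖ ^ q) :
    ‖fderiv ℝ (k ⋆[lsmul ℝ ℝ, μ] F) x v‖ ≤ K / r * ‖v‖ * C * meanOsc μ p r m x ^ q := by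
  rw [hk.fderiv_convolution_apply_eq hF x v (F x)]
  exact (hk.isKernel_fderiv_apply v).norm_integral_smul_le_meanOsc_rpow hk.radius_pos hm hB hq hqp
    hC x fun t => hFm (x - t)

lemma norm_convolution_sub_self_le (hk : IsMollifier μ K r k) (hF : StronglyMeasurable F)
    (hB : ∀ x, ‖F x‖ ≤ B) (hp : 1 ≤ p) (x : E) :
    ‖(k ⋆[lsmul ℝ ℝ, μ] F) x - F x‖ ≤ K * meanOsc μ p r F x := by
  simpa using hk.norm_convolution_sub_le hF hB (locallyIntegrable_of_norm_le hF hB) one_pos hp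
    zero_le_one x fun y => by simp

lemma norm_fderiv_convolution_self_apply_le (hk : IsMollifier μ K r k)
    (hF : StronglyMeasurable F) (hB : ∀ x, ‖F x‖ ≤ B) (hp : 1 ≤ p) (x v : E) :
    ‖fderiv ℝ (k ⋆[lsmul ℝ ℝ, μ] F) x v‖ ≤ K / r * ‖v‖ * meanOsc μ p r F x := by
  simpa using hk.norm_fderiv_convolution_apply_le hF hB (locallyIntegrable_of_norm_le hF hB)
    one_pos hp zero_le_one x v fun y => by simp

end Holder

section Sphere

variable {H : Type*} [NormedAddCommGroup H] [InnerProductSpace ℝ H] [CompleteSpace H]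
  {m : E → H} {p : ℝ}

lemma abs_one_sub_norm_convolution_sq_le (hk : IsMollifier μ K r k) (hm : StronglyMeasurable m)
    (h1 : ∀ x, ‖m x‖ = 1) (hp : 2 ≤ p) (x : E) :
    |1 - ‖(k ⋆[lsmul ℝ ℝ, μ] m) x‖ ^ 2| ≤ 2 * K ^ 2 * meanOsc μ p r m x ^ 2 := by
  have hloc : LocallyIntegrable m μ := locallyIntegrable_of_norm_le hm fun x => (h1 x).le
  set M := (k ⋆[lsmul ℝ ℝ, μ] m) x
  set s := meanOsc μ p r m x
  have hdist : ‖M - m x‖ ≤ K * s :=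
    hk.norm_convolution_sub_self_le hm (fun x => (h1 x).le) (one_le_two.trans hp) x
  have hinner : |⟪m x, M - m x⟫| ≤ K / 2 * s ^ 2 := by
    rw [hk.convolution_sub_eq hloc]
    exact hk.isKernel.abs_inner_integral_smul_sub_le hk.radius_pos hm h1 hp x
  have hexpand : 1 - ‖M‖ ^ 2 = -(2 * ⟪m x, M - m x⟫ + ‖M - m x‖ ^ 2) := by
    have := norm_add_sq_real (m x) (M - m x)
    rw [add_sub_cancel, h1] at this
    linarith
  calc |1 - ‖M‖ ^ 2| ≤ 2 * |⟪m x, M - m x⟫| + ‖M - m x‖ ^ 2 := by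
        rw [hexpand, abs_neg]
        refine (abs_add_le _ _).trans_eq ?_
        rw [abs_mul, abs_two, abs_of_nonneg (sq_nonneg ‖M - m x‖)]
    _ ≤ 2 * (K / 2 * s ^ 2) + (K * s) ^ 2 := by gcongr
    _ ≤ 2 * K ^ 2 * s ^ 2 := by nlinarith [hk.one_le, sq_nonneg s]

lemma abs_inner_convolution_fderiv_le (hk : IsMollifier μ K r k) (hm : StronglyMeasurable m)
    (h1 : ∀ x, ‖m x‖ = 1) (hp : 2 ≤ p) (x v : E) :
    |⟪(k ⋆[lsmul ℝ ℝ, μ] m) x, fderiv ℝ (k ⋆[lsmul ℝ ℝ, μ] m) x v⟫|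
      ≤ 2 * K ^ 2 / r * ‖v‖ * meanOsc μ p r m x ^ 2 := by
  have hloc : LocallyIntegrable m μ := locallyIntegrable_of_norm_le hm fun x => (h1 x).le
  have hp1 : 1 ≤ p := one_le_two.trans hp
  have hr := hk.radius_pos
  have hK := hk.one_le
  set M := (k ⋆[lsmul ℝ ℝ, μ] m) x
  set DMv := fderiv ℝ (k ⋆[lsmul ℝ ℝ, μ] m) x v with hDMv
  set s := meanOsc μ p r m x
  have hs : 0 ≤ s := meanOsc_nonneg μ p r m x
  have hdist : ‖M - m x‖ ≤ K * s :=
    hk.norm_convolution_sub_self_le hm (fun x => (h1 x).le) hp1 x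
  have hderiv : ‖DMv‖ ≤ K / r * ‖v‖ * s :=
    hk.norm_fderiv_convolution_self_apply_le hm (fun x => (h1 x).le) hp1 x v
  have hinner : |⟪m x, DMv⟫| ≤ K / r * ‖v‖ / 2 * s ^ 2 := by
    rw [hDMv, hk.fderiv_convolution_apply_eq hloc x v (m x)]
    exact (hk.isKernel_fderiv_apply v).abs_inner_integral_smul_sub_le hr hm h1 hp x
  calc |⟪M, DMv⟫| = |⟪m x, DMv⟫ + ⟪M - m x, DMv⟫| := by rw [← inner_add_left, add_sub_cancel]
    _ ≤ |⟪m x, DMv⟫| + ‖M - m x‖ * ‖DMv‖ :=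
        (abs_add_le _ _).trans (by gcongr; exact abs_real_inner_le_norm _ _)
    _ ≤ K / r * ‖v‖ / 2 * s ^ 2 + K * s * (K / r * ‖v‖ * s) := by gcongr
    _ = (K / 2 + K ^ 2) * (‖v‖ * s ^ 2 / r) := by ring
    _ ≤ 2 * K ^ 2 * (‖v‖ * s ^ 2 / r) := by gcongr; nlinarith
    _ = 2 * K ^ 2 / r * ‖v‖ * s ^ 2 := by ring

end Sphere

end IsMollifier

/-! ### Entropies and their quadratic extension -/

section Angle

lemma circ_add (a b : ℝ) : circ (a + b) = circ a * circ b := by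
  simp only [circ, Complex.ofReal_add, add_mul, Complex.exp_add]

lemma norm_circ (a : ℝ) : ‖circ a‖ = 1 := Complex.norm_exp_ofReal_mul_I a

lemma norm_mul_circ_arg (z : ℂ) : (‖z‖ : ℂ) * circ z.arg = z := Complex.norm_mul_exp_arg_mul_I z

lemma circ_arg {z : ℂ} (hz : ‖z‖ = 1) : circ z.arg = z := by
  simpa [hz] using norm_mul_circ_arg z

lemma circ_arg_eq_div {z : ℂ} (hz : z ≠ 0) : circ z.arg = z / ‖z‖ := by
  rw [eq_div_iff (by simpa using hz), mul_comm, norm_mul_circ_arg]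

lemma norm_circ_arg_sub_le (z : ℂ) {c : ℂ} (hc : ‖c‖ = 1) : ‖circ z.arg - c‖ ≤ 2 * ‖z - c‖ := by
  have hradial : ‖circ z.arg - z‖ ≤ ‖z - c‖ := by
    have hsub : circ z.arg - z = ((1 - ‖z‖ : ℝ) : ℂ) * circ z.arg := by
      rw [Complex.ofReal_sub, Complex.ofReal_one, sub_mul, one_mul, norm_mul_circ_arg]
    rw [hsub, norm_mul, norm_circ, mul_one, Complex.norm_real, Real.norm_eq_abs, ← hc,
      norm_sub_rev z]
    exact abs_norm_sub_norm_le c z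
  linarith [norm_sub_le_norm_sub_add_norm_sub (circ z.arg) z c]

lemma exists_circ_eq_circ_arg_abs_sub_arg_le (z : ℂ) {c : ℂ} (hc : ‖c‖ = 1) :
    ∃ θ : ℝ, circ θ = circ z.arg ∧ |θ - c.arg| ≤ π ∧ |θ - c.arg| ≤ π * ‖z - c‖ := by
  set w := circ z.arg
  have hw : ‖w‖ = 1 := norm_circ _
  have hc₀ : c ≠ 0 := norm_ne_zero_iff.1 (by simp [hc])
  have hw₀ : w ≠ 0 := norm_ne_zero_iff.1 (by simp [hw])
  refine ⟨c.arg + (w / c).arg, ?_, ?_, ?_⟩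
  · rw [circ_add, circ_arg hc, circ_arg (by simp [hw, hc]), mul_div_cancel₀ _ hc₀]
  · simpa using Complex.abs_arg_le_pi (w / c)
  · have hangle := Complex.angle_le_mul_norm_sub hw hc
    rw [Complex.angle_eq_abs_arg hw₀ hc₀] at hangle
    rw [add_sub_cancel_left]
    nlinarith [norm_circ_arg_sub_le z hc, Real.pi_pos]

variable {W : Type*} [NormedAddCommGroup W] [NormedSpace ℝ W] {Φ : ℂ → W}

lemma hasFDerivAt_comp_circ_arg {z : ℂ} {g : W} (hz : z ≠ 0)
    (hg : HasDerivAt (fun t => Φ (circ t)) g z.arg) :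
    HasFDerivAt (fun y : ℂ => Φ (circ y.arg))
      (((‖z‖ ^ 2)⁻¹ • innerSL ℝ (Complex.I * z)).smulRight g) z := by
  have hlog : HasDerivAt (fun y : ℂ => Complex.log (y / z)) z⁻¹ z := by
    have := ((hasDerivAt_id z).div_const z).clog
      (by simp [div_self hz])
    simpa [div_self hz] using this
  have hangle : HasFDerivAt (fun y : ℂ => z.arg + (Complex.log (y / z)).im)
      ((‖z‖ ^ 2)⁻¹ • innerSL ℝ (Complex.I * z)) z := by
    refine ((Complex.imCLM.hasFDerivAt.comp z
      (hlog.hasFDerivAt.restrictScalars ℝ)).const_add z.arg).congr_fderiv ?_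
    ext v
    simp only [ContinuousLinearMap.comp_apply, ContinuousLinearMap.coe_restrictScalars',
      ContinuousLinearMap.toSpanSingleton_apply, smul_eq_mul, Complex.imCLM_apply, Complex.mul_im,
      Complex.mul_re, Complex.inv_im, Complex.inv_re, Complex.normSq_eq_norm_sq, smul_apply,
      coe_innerSL_apply, Complex.inner, map_mul, Complex.conj_I, Complex.neg_re, Complex.neg_im,
      Complex.I_re, Complex.I_im, Complex.conj_re, Complex.conj_im]
    ring
  have hcomp : HasFDerivAt (fun y : ℂ => Φ (circ (z.arg + (Complex.log (y / z)).im)))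
      (((‖z‖ ^ 2)⁻¹ • innerSL ℝ (Complex.I * z)).smulRight g) z := by
    have hg' : HasDerivAt (fun t => Φ (circ t)) g (z.arg + (Complex.log (z / z)).im) := by
      simpa [div_self hz] using hg
    refine (hg'.hasFDerivAt.comp z hangle).congr_fderiv ?_
    ext v
    simp [smul_smul]
  refine hcomp.congr_of_eventuallyEq ?_
  filter_upwards [isOpen_ne.mem_nhds hz] with y hy
  have hy' : (‖y‖ : ℂ) ≠ 0 := by simpa using hy
  have hz' : (‖z‖ : ℂ) ≠ 0 := by simpa using hz
  congr 1
  rw [circ_add, Complex.log_im, circ_arg_eq_div hy, circ_arg_eq_div hz,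
    circ_arg_eq_div (div_ne_zero hy hz), norm_div, Complex.ofReal_div]
  field_simp

end Angle

/-- `Φ` is an entropy in the unit ball of `C^{1,α}(S¹)`, where `φ'` is the derivative of
`θ ↦ Φ(e^{iθ})`. -/
structure IsUnitHolderEntropy (α : ℝ) (Φ : ℂ → ℂ) (φ' : ℝ → ℂ) : Prop where
  hasDerivAt : ∀ θ, HasDerivAt (fun t => Φ (circ t)) (φ' θ) θ
  norm_le : ∀ θ, ‖Φ (circ θ)‖ ≤ 1
  norm_deriv_le : ∀ θ, ‖φ' θ‖ ≤ 1
  holder : ∀ θ₁ θ₂, ‖φ' θ₁ - φ' θ₂‖ ≤ |θ₁ - θ₂| ^ α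
  inner_circ_eq_zero : ∀ θ, ⟪circ θ, φ' θ⟫ = 0

/-- The extension `z ↦ |z|² Φ(z / |z|)` of `Φ` from the circle to the plane;
its `2`-homogeneity makes it differentiable at the origin. -/
def quadExt (Φ : ℂ → ℂ) (z : ℂ) : ℂ := ‖z‖ ^ 2 • Φ (circ z.arg)

/-- The differential of `quadExt Φ` at `z`, where `φ'` is the angular derivative of `Φ`. -/
def quadExtFDeriv (Φ : ℂ → ℂ) (φ' : ℝ → ℂ) (z : ℂ) : ℂ →L[ℝ] ℂ :=
  (2 • innerSL ℝ z).smulRight (Φ (circ z.arg))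
    + (innerSL ℝ (Complex.I * z)).smulRight (φ' z.arg)

/-- The `0`-homogeneous field `b = Φ + (i/2) Φ'`, through which the divergence of `quadExt Φ` along
a divergence-free field `M` is `2 ⟨M, DM b(M)⟩`. -/
def reducedEntropy (Φ : ℂ → ℂ) (φ' : ℝ → ℂ) (z : ℂ) : ℂ :=
  Φ (circ z.arg) + Complex.I / 2 * φ' z.arg

lemma trace_eq_re_add_im (L : ℂ →ₗ[ℝ] ℂ) :
    LinearMap.trace ℝ ℂ L = (L 1).re + (L Complex.I).im := by
  simp [LinearMap.trace_eq_matrix_trace ℝ Complex.basisOneI, Matrix.trace_fin_two,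
    LinearMap.toMatrix_apply]

lemma inner_I_mul_apply_eq_inner_apply_I_mul {L : ℂ →ₗ[ℝ] ℂ} (hL : LinearMap.trace ℝ ℂ L = 0)
    {z g : ℂ} (hzg : ⟪z, g⟫ = 0) : ⟪Complex.I * z, L g⟫ = ⟪z, L (Complex.I * g)⟫ := by
  have hcoord : ∀ w, L w = w.re • L 1 + w.im • L Complex.I := fun w => by
    rw [← map_smul, ← map_smul, ← map_add]
    congr 1
    simp
  rw [trace_eq_re_add_im] at hL
  rw [hcoord g, hcoord (Complex.I * g)]
  simp only [Complex.inner, Complex.add_re, Complex.add_im, Complex.real_smul, Complex.mul_re,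
    Complex.mul_im, Complex.conj_re, Complex.conj_im, Complex.I_re, Complex.I_im,
    Complex.ofReal_re, Complex.ofReal_im] at hzg ⊢
  linear_combination (z.re * g.im - z.im * g.re) * hL
    + ((L 1).im - (L Complex.I).re) * hzg

namespace IsUnitHolderEntropy

variable {α : ℝ} {Φ : ℂ → ℂ} {φ' : ℝ → ℂ}

lemma norm_sub_le (hΦ : IsUnitHolderEntropy α Φ φ') (a b : ℝ) :
    ‖Φ (circ a) - Φ (circ b)‖ ≤ |a - b| := by
  simpa using convex_univ.norm_image_sub_le_of_norm_hasDerivWithin_le (C := 1)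
    (fun θ _ => (hΦ.hasDerivAt θ).hasDerivWithinAt) (fun θ _ => hΦ.norm_deriv_le θ)
    (mem_univ b) (mem_univ a)

lemma deriv_eq_of_circ_eq (hΦ : IsUnitHolderEntropy α Φ φ') {a b : ℝ} (hab : circ a = circ b) :
    φ' a = φ' b := by
  have hperiodic : (fun t => Φ (circ t)) = fun t => Φ (circ (t + (a - b))) := funext fun t => by
    rw [show t + (a - b) = t - b + a by ring, circ_add, hab, ← circ_add, sub_add_cancel]
  have hderiv : HasDerivAt (fun t => Φ (circ (t + (a - b)))) (φ' a) b :=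
    HasDerivAt.comp_add_const b (a - b) (by simpa using hΦ.hasDerivAt a)
  rw [← hperiodic] at hderiv
  exact hderiv.unique (hΦ.hasDerivAt b)

lemma continuous_comp_circ (hΦ : IsUnitHolderEntropy α Φ φ') :
    Continuous fun θ => Φ (circ θ) :=
  continuous_iff_continuousAt.2 fun θ => (hΦ.hasDerivAt θ).continuousAt

lemma continuous_deriv (hΦ : IsUnitHolderEntropy α Φ φ') (hα : 0 < α) : Continuous φ' := by
  have hholder : HolderWith 1 α.toNNReal φ' := fun a b => by
    rw [edist_dist, edist_dist, Real.coe_toNNReal α hα.le, ENNReal.coe_one, one_mul,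
      ENNReal.ofReal_rpow_of_nonneg dist_nonneg hα.le, dist_eq_norm, Real.dist_eq]
    exact ENNReal.ofReal_le_ofReal (hΦ.holder a b)
  exact hholder.continuous (Real.toNNReal_pos.2 hα)

lemma measurable_reducedEntropy (hΦ : IsUnitHolderEntropy α Φ φ') (hα : 0 < α) :
    Measurable (reducedEntropy Φ φ') :=
  (hΦ.continuous_comp_circ.measurable.comp Complex.measurable_arg).add
    (((hΦ.continuous_deriv hα).measurable.comp Complex.measurable_arg).const_mul _)

lemma norm_reducedEntropy_le (hΦ : IsUnitHolderEntropy α Φ φ') (z : ℂ) :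
    ‖reducedEntropy Φ φ' z‖ ≤ 2 := by
  have hle := norm_add_le (Φ (circ z.arg)) (Complex.I / 2 * φ' z.arg)
  simp only [norm_mul, norm_div, Complex.norm_I, Complex.norm_ofNat] at hle
  rw [reducedEntropy]
  linarith [hΦ.norm_le z.arg, hΦ.norm_deriv_le z.arg]

lemma norm_reducedEntropy_sub_le (hΦ : IsUnitHolderEntropy α Φ φ') (hα : α ∈ Ioc 0 1) (z : ℂ)
    {c : ℂ} (hc : ‖c‖ = 1) :
    ‖reducedEntropy Φ φ' z - reducedEntropy Φ φ' c‖ ≤ 20 * ‖z - c‖ ^ α := by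
  obtain ⟨θ, hθ, hθπ, hθz⟩ := exists_circ_eq_circ_arg_abs_sub_arg_le z hc
  set d := |θ - c.arg|
  have hd₀ : 0 ≤ d := abs_nonneg _
  have hangle : ‖reducedEntropy Φ φ' z - reducedEntropy Φ φ' c‖ ≤ d + d ^ α / 2 := by
    have hsub : reducedEntropy Φ φ' z - reducedEntropy Φ φ' c
        = (Φ (circ θ) - Φ (circ c.arg)) + Complex.I / 2 * (φ' θ - φ' c.arg) := by
      rw [reducedEntropy, reducedEntropy, hθ, hΦ.deriv_eq_of_circ_eq hθ]; ring
    rw [hsub]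
    refine (norm_add_le _ _).trans ?_
    simp only [norm_mul, norm_div, Complex.norm_I, Complex.norm_ofNat]
    linarith [hΦ.norm_sub_le θ c.arg, hΦ.holder θ c.arg]
  have hlinear : d ≤ π * d ^ α := by
    calc d = d ^ (1 - α) * d ^ α := by
          rw [← Real.rpow_add_of_nonneg hd₀ (sub_nonneg.2 hα.2) hα.1.le, sub_add_cancel,
            Real.rpow_one]
      _ ≤ π * d ^ α := by
          gcongr
          calc d ^ (1 - α) ≤ π ^ (1 - α) := Real.rpow_le_rpow hd₀ hθπ (sub_nonneg.2 hα.2)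
            _ ≤ π := Real.rpow_le_self_of_one_le (by linarith [Real.pi_gt_three])
                (by linarith [hα.1])
  have hpow : d ^ α ≤ π * ‖z - c‖ ^ α := by
    calc d ^ α ≤ (π * ‖z - c‖) ^ α := Real.rpow_le_rpow hd₀ hθz hα.1.le
      _ = π ^ α * ‖z - c‖ ^ α := Real.mul_rpow Real.pi_pos.le (norm_nonneg _)
      _ ≤ π * ‖z - c‖ ^ α := by
          gcongr
          exact Real.rpow_le_self_of_one_le (by linarith [Real.pi_gt_three]) hα.2
  calc ‖reducedEntropy Φ φ' z - reducedEntropy Φ φ' c‖ ≤ (π + 1 / 2) * d ^ α := by linarith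
    _ ≤ (π + 1 / 2) * (π * ‖z - c‖ ^ α) := by gcongr
    _ = (π + 1 / 2) * π * ‖z - c‖ ^ α := by ring
    _ ≤ 20 * ‖z - c‖ ^ α := by
        gcongr
        nlinarith [Real.pi_lt_d2, Real.pi_gt_three]

lemma norm_quadExt_sub_le (hΦ : IsUnitHolderEntropy α Φ φ') {z c : ℂ} (hz : ‖z‖ ≤ 1)
    (hc : ‖c‖ = 1) : ‖quadExt Φ z - Φ c‖ ≤ 6 * ‖z - c‖ := by
  obtain ⟨θ, hθ, -, hθz⟩ := exists_circ_eq_circ_arg_abs_sub_arg_le z hc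
  have hangular : ‖Φ (circ θ) - Φ c‖ ≤ π * ‖z - c‖ := by
    simpa [circ_arg hc] using (hΦ.norm_sub_le θ c.arg).trans hθz
  have hradial : ‖(1 - ‖z‖ ^ 2) • Φ (circ θ)‖ ≤ 2 * ‖z - c‖ := by
    have hzc : 1 - ‖z‖ ≤ ‖z - c‖ := by
      rw [← hc, norm_sub_rev]; exact norm_sub_norm_le c z
    have hnonneg : 0 ≤ 1 - ‖z‖ ^ 2 := by nlinarith [norm_nonneg z]
    rw [norm_smul, Real.norm_of_nonneg hnonneg]
    nlinarith [hΦ.norm_le θ, norm_nonneg z]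
  have hsub : quadExt Φ z - Φ c = (Φ (circ θ) - Φ c) - (1 - ‖z‖ ^ 2) • Φ (circ θ) := by
    rw [quadExt, ← hθ, sub_smul, one_smul]; abel
  rw [hsub]
  refine (_root_.norm_sub_le _ _).trans ?_
  nlinarith [norm_nonneg (z - c), Real.pi_lt_d2]

lemma hasFDerivAt_quadExt (hΦ : IsUnitHolderEntropy α Φ φ') (z : ℂ) :
    HasFDerivAt (quadExt Φ) (quadExtFDeriv Φ φ' z) z := by
  rcases eq_or_ne z 0 with rfl | hz
  · have hbound : (fun h => quadExt Φ (0 + h) - quadExt Φ 0 - quadExtFDeriv Φ φ' 0 h)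
        =O[𝓝 0] fun h : ℂ => ‖h‖ ^ 2 := by
      refine .of_bound 1 (.of_forall fun h => ?_)
      simp only [quadExt, quadExtFDeriv, zero_add, norm_zero, mul_zero, map_zero, smul_zero,
        ContinuousLinearMap.zero_smulRight, zero_apply, sub_zero, norm_smul,
        norm_pow, norm_norm, one_mul, ne_eq, OfNat.ofNat_ne_zero, not_false_eq_true, zero_pow,
        zero_smul, add_zero]
      exact mul_le_of_le_one_right (by positivity) (hΦ.norm_le _)
    exact hasFDerivAt_iff_isLittleO_nhds_zero.2
      (hbound.trans_isLittleO (Asymptotics.isLittleO_norm_pow_id one_lt_two))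
  · refine ((hasStrictFDerivAt_norm_sq z).hasFDerivAt.smul
      (hasFDerivAt_comp_circ_arg hz (hΦ.hasDerivAt z.arg))).congr_fderiv ?_
    have hz' : ‖z‖ ^ 2 * (‖z‖ ^ 2)⁻¹ = 1 := mul_inv_cancel₀ (by simpa using hz)
    ext v : 1
    simp only [quadExtFDeriv, add_apply, smul_apply, ContinuousLinearMap.smulRight_apply, smul_smul,
      smul_eq_mul, ← mul_assoc, hz', one_mul]
    exact add_comm _ _

lemma norm_quadExtFDeriv_le (hΦ : IsUnitHolderEntropy α Φ φ') (z : ℂ) :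
    ‖quadExtFDeriv Φ φ' z‖ ≤ 3 * ‖z‖ := by
  refine (norm_add_le _ _).trans ?_
  rw [ContinuousLinearMap.norm_smulRight_apply, ContinuousLinearMap.norm_smulRight_apply, two_smul,
    innerSL_apply_norm, norm_mul, Complex.norm_I, one_mul]
  have hdouble : ‖innerSL ℝ z + innerSL ℝ z‖ ≤ ‖z‖ + ‖z‖ := by
    simpa using norm_add_le (innerSL ℝ z) (innerSL ℝ z)
  nlinarith [hΦ.norm_le z.arg, hΦ.norm_deriv_le z.arg, norm_nonneg z, norm_nonneg (Φ (circ z.arg)),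
    mul_le_mul hdouble (hΦ.norm_le z.arg) (norm_nonneg _) (by positivity)]

lemma trace_quadExtFDeriv_comp (hΦ : IsUnitHolderEntropy α Φ φ') {L : ℂ →L[ℝ] ℂ}
    (hL : LinearMap.trace ℝ ℂ L = 0) (z : ℂ) :
    LinearMap.trace ℝ ℂ (quadExtFDeriv Φ φ' z ∘L L) = 2 * ⟪z, L (reducedEntropy Φ φ' z)⟫ := by
  have hsum : ((quadExtFDeriv Φ φ' z ∘L L : ℂ →L[ℝ] ℂ) : ℂ →ₗ[ℝ] ℂ)
      = ((2 • innerₛₗ ℝ z) ∘ₗ (L : ℂ →ₗ[ℝ] ℂ)).smulRight (Φ (circ z.arg))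
        + (innerₛₗ ℝ (Complex.I * z) ∘ₗ (L : ℂ →ₗ[ℝ] ℂ)).smulRight (φ' z.arg) := by
    rfl
  have horth : ⟪z, φ' z.arg⟫ = 0 := by
    calc ⟪z, φ' z.arg⟫ = ⟪‖z‖ • circ z.arg, φ' z.arg⟫ := by
          rw [Complex.real_smul, norm_mul_circ_arg]
      _ = 0 := by rw [real_inner_smul_left, hΦ.inner_circ_eq_zero, mul_zero]
  have hrotate := inner_I_mul_apply_eq_inner_apply_I_mul (L := L) hL horth
  have hhalf : Complex.I / 2 * φ' z.arg = (1 / 2 : ℝ) • (Complex.I * φ' z.arg) := by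
    rw [Complex.real_smul]; push_cast; ring
  simp only [ContinuousLinearMap.coe_coe] at hrotate
  rw [hsum, map_add, LinearMap.trace_smulRight, LinearMap.trace_smulRight, reducedEntropy, hhalf,
    map_add, map_smul, inner_add_right, real_inner_smul_right, ← hrotate]
  simp only [LinearMap.coe_comp, LinearMap.coe_smul, coe_innerₛₗ_apply, nsmul_eq_mul,
    Nat.cast_ofNat, ContinuousLinearMap.coe_coe, Function.comp_apply, Pi.mul_apply,
    Pi.ofNat_apply]
  ring

end IsUnitHolderEntropy

/-! ### The corrected flux -/

/-- The approximation `Ψ(M) + (1 - |M|²) N` of the flux `Φ(m)` by the quadratic extension `Ψ` of `Φ`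
at an approximation `M` of `m`; the correction by `N ≈ b(m)` makes its divergence cubic in the
increments of `m`. -/
def correctedFlux (Φ M N : ℂ → ℂ) (x : ℂ) : ℂ := quadExt Φ (M x) + (1 - ‖M x‖ ^ 2) • N x

/-- The differential of `correctedFlux Φ M N` at `x`, where `M'` and `N'` are the
differentials of `M` and `N`. -/
def correctedFluxFDeriv (Φ : ℂ → ℂ) (φ' : ℝ → ℂ) (M N : ℂ → ℂ) (M' N' : ℂ →L[ℝ] ℂ) (x : ℂ) :
    ℂ →L[ℝ] ℂ :=
  quadExtFDeriv Φ φ' (M x) ∘L M'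
    + ((1 - ‖M x‖ ^ 2) • N' - (2 • innerSL ℝ (M x) ∘L M').smulRight (N x))

namespace IsUnitHolderEntropy

variable {α : ℝ} {Φ : ℂ → ℂ} {φ' : ℝ → ℂ} {M N : ℂ → ℂ} {M' N' : ℂ →L[ℝ] ℂ} {x : ℂ}

lemma hasFDerivAt_correctedFlux (hΦ : IsUnitHolderEntropy α Φ φ') (hM : HasFDerivAt M M' x)
    (hN : HasFDerivAt N N' x) :
    HasFDerivAt (correctedFlux Φ M N) (correctedFluxFDeriv Φ φ' M N M' N' x) x := by
  have hext := (hΦ.hasFDerivAt_quadExt (M x)).comp x hM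
  have hdefect : HasFDerivAt (fun y => 1 - ‖M y‖ ^ 2) (-(2 • innerSL ℝ (M x) ∘L M')) x :=
    hM.norm_sq.const_sub 1
  refine (hext.add (hdefect.smul hN)).congr_fderiv ?_
  ext v : 1
  simp only [correctedFluxFDeriv, sub_eq_add_neg, add_apply, neg_apply, smul_apply,
    ContinuousLinearMap.comp_apply, ContinuousLinearMap.smulRight_apply, coe_innerSL_apply,
    Complex.real_smul, Complex.ofReal_neg, nsmul_eq_mul]
  ring

lemma trace_correctedFluxFDeriv (hΦ : IsUnitHolderEntropy α Φ φ')
    (hM' : LinearMap.trace ℝ ℂ M' = 0) :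
    LinearMap.trace ℝ ℂ (correctedFluxFDeriv Φ φ' M N M' N' x)
      = 2 * ⟪M x, M' (reducedEntropy Φ φ' (M x) - N x)⟫
        + (1 - ‖M x‖ ^ 2) * LinearMap.trace ℝ ℂ N' := by
  have hsum : (correctedFluxFDeriv Φ φ' M N M' N' x : ℂ →ₗ[ℝ] ℂ)
      = ((quadExtFDeriv Φ φ' (M x) ∘L M' : ℂ →L[ℝ] ℂ) : ℂ →ₗ[ℝ] ℂ)
        + ((1 - ‖M x‖ ^ 2) • (N' : ℂ →ₗ[ℝ] ℂ)
          - ((2 • innerₛₗ ℝ (M x)) ∘ₗ (M' : ℂ →ₗ[ℝ] ℂ)).smulRight (N x)) := by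
    rfl
  rw [hsum, map_add, map_sub, map_smul, LinearMap.trace_smulRight,
    hΦ.trace_quadExtFDeriv_comp hM', map_sub, inner_sub_right]
  simp only [LinearMap.coe_comp, LinearMap.coe_smul, coe_innerₛₗ_apply, nsmul_eq_mul,
    Nat.cast_ofNat, ContinuousLinearMap.coe_coe, Function.comp_apply, Pi.mul_apply,
    Pi.ofNat_apply, smul_eq_mul]
  ring

lemma norm_correctedFluxFDeriv_le (hΦ : IsUnitHolderEntropy α Φ φ') {L : ℝ} (hM : ‖M x‖ ≤ 1)
    (hN : ‖N x‖ ≤ 2) (hM' : ‖M'‖ ≤ L) (hN' : ‖N'‖ ≤ 2 * L) :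
    ‖correctedFluxFDeriv Φ φ' M N M' N' x‖ ≤ 9 * L := by
  have hext : ‖quadExtFDeriv Φ φ' (M x) ∘L M'‖ ≤ 3 * L := by
    refine (ContinuousLinearMap.opNorm_comp_le _ _).trans ?_
    gcongr
    linarith [hΦ.norm_quadExtFDeriv_le (M x)]
  have hdefect : ‖(1 - ‖M x‖ ^ 2) • N'‖ ≤ 2 * L := by
    rw [norm_smul, Real.norm_of_nonneg (sub_nonneg.2 (pow_le_one₀ (norm_nonneg _) hM))]
    nlinarith [norm_nonneg N', sq_nonneg ‖M x‖]
  have hcross : ‖(2 • innerSL ℝ (M x) ∘L M').smulRight (N x)‖ ≤ 4 * L := by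
    have hcomp : ‖innerSL ℝ (M x) ∘L M'‖ ≤ 1 * L := by
      refine (ContinuousLinearMap.opNorm_comp_le _ _).trans ?_
      rw [innerSL_apply_norm]
      gcongr
    have hdouble : ‖2 • innerSL ℝ (M x) ∘L M'‖ ≤ 2 * L := by
      rw [two_smul]
      linarith [norm_add_le (innerSL ℝ (M x) ∘L M') (innerSL ℝ (M x) ∘L M')]
    rw [ContinuousLinearMap.norm_smulRight_apply]
    nlinarith [norm_nonneg (N x), norm_nonneg M']
  rw [correctedFluxFDeriv]
  linarith [norm_add_le (quadExtFDeriv Φ φ' (M x) ∘L M')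
      ((1 - ‖M x‖ ^ 2) • N' - (2 • innerSL ℝ (M x) ∘L M').smulRight (N x)),
    _root_.norm_sub_le ((1 - ‖M x‖ ^ 2) • N') ((2 • innerSL ℝ (M x) ∘L M').smulRight (N x))]

end IsUnitHolderEntropy

lemma IsMollifier.norm_fderiv_convolution_le [NormedSpace ℝ E] [BorelSpace E]
    [FiniteDimensional ℝ E] [μ.IsAddHaarMeasure] [NormedSpace ℝ V] {K r B : ℝ} {k : E → ℝ}
    {F : E → V} (hk : IsMollifier μ K r k) (hF : LocallyIntegrable F μ) (hB : ∀ x, ‖F x‖ ≤ B)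
    (x : E) : ‖fderiv ℝ (k ⋆[lsmul ℝ ℝ, μ] F) x‖ ≤ K / r * B := by
  have hr := hk.radius_pos
  have hB₀ : 0 ≤ B := (norm_nonneg _).trans (hB 0)
  have hK₀ : 0 ≤ K := zero_le_one.trans hk.one_le
  refine ContinuousLinearMap.opNorm_le_bound _ (by positivity) fun v => ?_
  rw [fderiv_convolution_lsmul_apply hk.contDiff_one hk.isKernel.hasCompactSupport hF]
  calc ‖∫ t, fderiv ℝ k t v • F (x - t) ∂μ‖ ≤ K / r * ‖v‖ * ⨍ _ in ball (0 : E) r, B ∂μ :=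
        (hk.isKernel_fderiv_apply v).norm_integral_smul_le (fun t => hB (x - t))
          (integrableOn_const measure_ball_lt_top.ne)
    _ = K / r * B * ‖v‖ := by
        rw [setAverage_const (measure_ball_pos μ 0 hr).ne' measure_ball_lt_top.ne]
        ring

lemma abs_trace_le (L : ℂ →L[ℝ] ℂ) : |LinearMap.trace ℝ ℂ L| ≤ ‖L 1‖ + ‖L Complex.I‖ := by
  rw [trace_eq_re_add_im]
  exact (abs_add_le _ _).trans
    (add_le_add (Complex.abs_re_le_norm _) (Complex.abs_im_le_norm _))

lemma trace_fderiv_convolution_eq_zero_of_divFree {K r : ℝ} {k : ℂ → ℝ} {Ω : Set ℂ} {m : ℂ → ℂ}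
    {x : ℂ} (hk : IsMollifier volume K r k) (hloc : LocallyIntegrable m)
    (hdiv : DivFree Ω m) (hx : ball x r ⊆ Ω) :
    LinearMap.trace ℝ ℂ (fderiv ℝ (k ⋆[lsmul ℝ ℝ, volume] m) x) = 0 := by
  set η : ℂ → ℝ := fun y => k (x - y)
  have hηΩ : tsupport η ⊆ Ω := by
    have hpre : tsupport η ⊆ (x - ·) ⁻¹' tsupport k :=
      tsupport_comp_subset_preimage k (by fun_prop)
    refine (hpre.trans fun y hy => ?_).trans hx
    simpa [dist_comm, dist_eq_norm] using hk.tsupport_subset hy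
  have hηc : HasCompactSupport η :=
    hk.isKernel.hasCompactSupport.comp_homeomorph (Homeomorph.subLeft x)
  have hηd : ∀ y v, fderiv ℝ η y v = -fderiv ℝ k (x - y) v := fun y v => by
    have hk' := (hk.contDiff_one.differentiable one_ne_zero (x - y)).hasFDerivAt
    have hη : HasFDerivAt η _ y := hk'.comp y ((hasFDerivAt_id y).const_sub x)
    rw [hη.fderiv]
    simp
  have hzero : ∫ y, fderiv ℝ η y (m y) = 0 := by
    rw [← hdiv η ⟨hk.contDiff.comp (contDiff_const.sub contDiff_id), hηc, hηΩ⟩]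
    refine (setIntegral_eq_integral_of_forall_compl_eq_zero fun y hy => ?_).symm
    rw [image_eq_zero_of_notMem_tsupport fun h => hy (hηΩ (tsupport_fderiv_subset ℝ h))]
    rfl
  rw [trace_fderiv_convolution_lsmul hk.contDiff_one hk.isKernel.hasCompactSupport hloc,
    ← integral_sub_left_eq_self _ volume x]
  simpa [hηd, integral_neg] using hzero

/-- The corrected flux at the mollifications `M = k ⋆ m` and `N = k ⋆ (b ∘ m)`. -/
def mollifiedFlux (Φ : ℂ → ℂ) (φ' : ℝ → ℂ) (k : ℂ → ℝ) (m : ℂ → ℂ) : ℂ → ℂ :=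
  correctedFlux Φ (k ⋆[lsmul ℝ ℝ, volume] m)
    (k ⋆[lsmul ℝ ℝ, volume] (reducedEntropy Φ φ' ∘ m))

namespace IsUnitHolderEntropy

variable {α K r : ℝ} {Φ : ℂ → ℂ} {φ' : ℝ → ℂ} {k : ℂ → ℝ} {m : ℂ → ℂ}

lemma locallyIntegrable_reducedEntropy_comp (hΦ : IsUnitHolderEntropy α Φ φ') (hα : 0 < α)
    (hm : Measurable m) : LocallyIntegrable (reducedEntropy Φ φ' ∘ m) :=
  locallyIntegrable_of_norm_le ((hΦ.measurable_reducedEntropy hα).comp hm).stronglyMeasurable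
    fun x => hΦ.norm_reducedEntropy_le (m x)

lemma norm_reducedEntropy_comp_sub_le (hΦ : IsUnitHolderEntropy α Φ φ') (hα : α ∈ Ioc 0 1)
    (h1 : ∀ x, ‖m x‖ = 1) (x y : ℂ) :
    ‖(reducedEntropy Φ φ' ∘ m) y - (reducedEntropy Φ φ' ∘ m) x‖ ≤ 20 * ‖m y - m x‖ ^ α :=
  hΦ.norm_reducedEntropy_sub_le hα (m y) (h1 x)

lemma hasFDerivAt_mollifiedFlux (hΦ : IsUnitHolderEntropy α Φ φ') (hα : 0 < α)
    (hk : IsMollifier volume K r k) (hm : Measurable m) (h1 : ∀ x, ‖m x‖ = 1) (x : ℂ) :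
    HasFDerivAt (mollifiedFlux Φ φ' k m)
      (correctedFluxFDeriv Φ φ' (k ⋆[lsmul ℝ ℝ, volume] m)
        (k ⋆[lsmul ℝ ℝ, volume] (reducedEntropy Φ φ' ∘ m))
        (fderiv ℝ (k ⋆[lsmul ℝ ℝ, volume] m) x)
        (fderiv ℝ (k ⋆[lsmul ℝ ℝ, volume] (reducedEntropy Φ φ' ∘ m)) x) x) x :=
  hΦ.hasFDerivAt_correctedFlux
    (hk.differentiable_convolution (locallyIntegrable_of_norm_le hm.stronglyMeasurable
      fun x => (h1 x).le) x).hasFDerivAt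
    (hk.differentiable_convolution (hΦ.locallyIntegrable_reducedEntropy_comp hα hm) x).hasFDerivAt

lemma differentiable_mollifiedFlux (hΦ : IsUnitHolderEntropy α Φ φ') (hα : 0 < α)
    (hk : IsMollifier volume K r k) (hm : Measurable m) (h1 : ∀ x, ‖m x‖ = 1) :
    Differentiable ℝ (mollifiedFlux Φ φ' k m) :=
  fun x => (hΦ.hasFDerivAt_mollifiedFlux hα hk hm h1 x).differentiableAt

lemma norm_fderiv_mollifiedFlux_le (hΦ : IsUnitHolderEntropy α Φ φ') (hα : 0 < α)
    (hk : IsMollifier volume K r k) (hm : Measurable m) (h1 : ∀ x, ‖m x‖ = 1) (x : ℂ) :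
    ‖fderiv ℝ (mollifiedFlux Φ φ' k m) x‖ ≤ 9 * (K / r) := by
  have hloc := locallyIntegrable_of_norm_le (μ := volume) hm.stronglyMeasurable
    fun x => (h1 x).le
  have hb := hΦ.locallyIntegrable_reducedEntropy_comp hα hm
  rw [(hΦ.hasFDerivAt_mollifiedFlux hα hk hm h1 x).fderiv]
  refine hΦ.norm_correctedFluxFDeriv_le (hk.norm_convolution_le (fun x => (h1 x).le) x)
    (hk.norm_convolution_le (fun x => hΦ.norm_reducedEntropy_le (m x)) x) ?_ ?_
  · simpa using hk.norm_fderiv_convolution_le hloc (fun x => (h1 x).le) x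
  · simpa [mul_comm] using
      hk.norm_fderiv_convolution_le hb (fun x => hΦ.norm_reducedEntropy_le (m x)) x

lemma norm_mollifiedFlux_sub_le (hΦ : IsUnitHolderEntropy α Φ φ')
    (hk : IsMollifier volume K r k) (hm : Measurable m) (h1 : ∀ x, ‖m x‖ = 1) {p : ℝ}
    (hp : 1 ≤ p) (x : ℂ) :
    ‖mollifiedFlux Φ φ' k m x - Φ (m x)‖ ≤ 10 * K * meanOsc volume p r m x := by
  set M := (k ⋆[lsmul ℝ ℝ, volume] m) x
  set N := (k ⋆[lsmul ℝ ℝ, volume] (reducedEntropy Φ φ' ∘ m)) x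
  have hM : ‖M‖ ≤ 1 := hk.norm_convolution_le (fun x => (h1 x).le) x
  have hN : ‖N‖ ≤ 2 := hk.norm_convolution_le (fun x => hΦ.norm_reducedEntropy_le (m x)) x
  have hdist : ‖M - m x‖ ≤ K * meanOsc volume p r m x :=
    hk.norm_convolution_sub_self_le hm.stronglyMeasurable (fun x => (h1 x).le) hp x
  have hdefect : ‖(1 - ‖M‖ ^ 2) • N‖ ≤ 4 * ‖M - m x‖ := by
    have hradial : 1 - ‖M‖ ≤ ‖M - m x‖ := by
      rw [← h1 x, norm_sub_rev]; exact norm_sub_norm_le (m x) M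
    have hnonneg : 0 ≤ 1 - ‖M‖ ^ 2 := sub_nonneg.2 (pow_le_one₀ (norm_nonneg _) hM)
    rw [norm_smul, Real.norm_of_nonneg hnonneg]
    nlinarith [norm_nonneg M]
  calc ‖quadExt Φ M + (1 - ‖M‖ ^ 2) • N - Φ (m x)‖
      = ‖quadExt Φ M - Φ (m x) + (1 - ‖M‖ ^ 2) • N‖ := by congr 1; abel
    _ ≤ 6 * ‖M - m x‖ + 4 * ‖M - m x‖ :=
        (norm_add_le _ _).trans (add_le_add (hΦ.norm_quadExt_sub_le hM (h1 x)) hdefect)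
    _ ≤ 10 * K * meanOsc volume p r m x := by linarith

lemma norm_reducedEntropy_convolution_sub_le (hΦ : IsUnitHolderEntropy α Φ φ')
    (hα : α ∈ Ioc 0 1) (hk : IsMollifier volume K r k) (hm : Measurable m)
    (h1 : ∀ x, ‖m x‖ = 1) {p : ℝ} (hp : 1 ≤ p) (x : ℂ) :
    ‖reducedEntropy Φ φ' ((k ⋆[lsmul ℝ ℝ, volume] m) x)
        - (k ⋆[lsmul ℝ ℝ, volume] (reducedEntropy Φ φ' ∘ m)) x‖
      ≤ 40 * K * meanOsc volume p r m x ^ α := by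
  have hm' := hm.stronglyMeasurable
  have h1' : ∀ x, ‖m x‖ ≤ 1 := fun x => (h1 x).le
  have hs := meanOsc_nonneg volume p r m x
  set M := (k ⋆[lsmul ℝ ℝ, volume] m) x
  set N := (k ⋆[lsmul ℝ ℝ, volume] (reducedEntropy Φ φ' ∘ m)) x
  set s := meanOsc volume p r m x
  have hbM : ‖reducedEntropy Φ φ' M - reducedEntropy Φ φ' (m x)‖ ≤ 20 * K * s ^ α :=
    calc ‖reducedEntropy Φ φ' M - reducedEntropy Φ φ' (m x)‖ ≤ 20 * ‖M - m x‖ ^ α :=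
          hΦ.norm_reducedEntropy_sub_le hα M (h1 x)
      _ ≤ 20 * (K * s) ^ α := by
          gcongr
          · exact hα.1.le
          · exact hk.norm_convolution_sub_self_le hm' h1' hp x
      _ = 20 * (K ^ α * s ^ α) := by
          rw [Real.mul_rpow (zero_le_one.trans hk.one_le) hs]
      _ ≤ 20 * (K * s ^ α) := by
          gcongr
          exact Real.rpow_le_self_of_one_le hk.one_le hα.2
      _ = 20 * K * s ^ α := by ring
  have hN : ‖N - reducedEntropy Φ φ' (m x)‖ ≤ K * 20 * s ^ α :=
    hk.norm_convolution_sub_le hm' h1' (hΦ.locallyIntegrable_reducedEntropy_comp hα.1 hm) hα.1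
      (hα.2.trans hp) (by norm_num) x (hΦ.norm_reducedEntropy_comp_sub_le hα h1 x)
  rw [norm_sub_rev] at hN
  linarith [norm_sub_le_norm_sub_add_norm_sub (reducedEntropy Φ φ' M)
    (reducedEntropy Φ φ' (m x)) N]

lemma abs_trace_fderiv_convolution_reducedEntropy_le (hΦ : IsUnitHolderEntropy α Φ φ')
    (hα : α ∈ Ioc 0 1) (hk : IsMollifier volume K r k) (hm : Measurable m)
    (h1 : ∀ x, ‖m x‖ = 1) {p : ℝ} (hp : 1 ≤ p) (x : ℂ) :
    |LinearMap.trace ℝ ℂ (fderiv ℝ (k ⋆[lsmul ℝ ℝ, volume] (reducedEntropy Φ φ' ∘ m)) x)|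
      ≤ 40 * (K / r) * meanOsc volume p r m x ^ α := by
  have hbound := fun v => hk.norm_fderiv_convolution_apply_le hm.stronglyMeasurable
    (fun x => (h1 x).le) (hΦ.locallyIntegrable_reducedEntropy_comp hα.1 hm) hα.1 (hα.2.trans hp)
    (by norm_num) x v (hΦ.norm_reducedEntropy_comp_sub_le hα h1 x)
  have hone := hbound 1
  have hI := hbound Complex.I
  rw [norm_one, mul_one] at hone
  rw [Complex.norm_I, mul_one] at hI
  linarith [abs_trace_le (fderiv ℝ (k ⋆[lsmul ℝ ℝ, volume] (reducedEntropy Φ φ' ∘ m)) x)]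

lemma abs_trace_fderiv_mollifiedFlux_le (hΦ : IsUnitHolderEntropy α Φ φ')
    (hα : α ∈ Ioc 0 1) (hk : IsMollifier volume K r k) (hm : Measurable m)
    (h1 : ∀ x, ‖m x‖ = 1) {p : ℝ} (hp : 2 ≤ p) {x : ℂ}
    (hx : LinearMap.trace ℝ ℂ (fderiv ℝ (k ⋆[lsmul ℝ ℝ, volume] m) x) = 0) :
    |LinearMap.trace ℝ ℂ (fderiv ℝ (mollifiedFlux Φ φ' k m) x)|
      ≤ 240 * K ^ 3 / r * meanOsc volume p r m x ^ (2 + α) := by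
  have hr := hk.radius_pos
  have hK := hk.one_le
  have hp1 : 1 ≤ p := one_le_two.trans hp
  set M := (k ⋆[lsmul ℝ ℝ, volume] m) x
  set DM := fderiv ℝ (k ⋆[lsmul ℝ ℝ, volume] m) x
  set w := reducedEntropy Φ φ' M - (k ⋆[lsmul ℝ ℝ, volume] (reducedEntropy Φ φ' ∘ m)) x
  set DN := fderiv ℝ (k ⋆[lsmul ℝ ℝ, volume] (reducedEntropy Φ φ' ∘ m)) x
  set s := meanOsc volume p r m x
  have hs : 0 ≤ s := meanOsc_nonneg volume p r m x
  have hinner : |⟪M, DM w⟫| ≤ 2 * K ^ 2 / r * ‖w‖ * s ^ 2 :=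
    hk.abs_inner_convolution_fderiv_le hm.stronglyMeasurable h1 hp x w
  have hw : ‖w‖ ≤ 40 * K * s ^ α :=
    hΦ.norm_reducedEntropy_convolution_sub_le hα hk hm h1 hp1 x
  have hdefect : |1 - ‖M‖ ^ 2| ≤ 2 * K ^ 2 * s ^ 2 :=
    hk.abs_one_sub_norm_convolution_sq_le hm.stronglyMeasurable h1 hp x
  have htrN : |LinearMap.trace ℝ ℂ DN| ≤ 40 * (K / r) * s ^ α :=
    hΦ.abs_trace_fderiv_convolution_reducedEntropy_le hα hk hm h1 hp1 x
  rw [(hΦ.hasFDerivAt_mollifiedFlux hα.1 hk hm h1 x).fderiv, hΦ.trace_correctedFluxFDeriv hx]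
  calc |2 * ⟪M, DM w⟫ + (1 - ‖M‖ ^ 2) * LinearMap.trace ℝ ℂ DN|
      ≤ 2 * |⟪M, DM w⟫| + |1 - ‖M‖ ^ 2| * |LinearMap.trace ℝ ℂ DN| := by
        refine (abs_add_le _ _).trans_eq ?_
        rw [abs_mul, abs_mul, abs_two]
    _ ≤ 2 * (2 * K ^ 2 / r * (40 * K * s ^ α) * s ^ 2)
          + 2 * K ^ 2 * s ^ 2 * (40 * (K / r) * s ^ α) := by
        gcongr
        exact hinner.trans (by gcongr)
    _ = 240 * K ^ 3 / r * (s ^ (2 : ℝ) * s ^ α) := by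
        rw [Real.rpow_two]; ring
    _ = 240 * K ^ 3 / r * s ^ (2 + α) := by
        rw [Real.rpow_add_of_nonneg hs zero_le_two hα.1.le]

end IsUnitHolderEntropy

/-! ### Integration by parts against the corrected flux -/

section IntegrationByParts

variable [NormedSpace ℝ E] [BorelSpace E]

lemma integrable_mul_fderiv_apply [IsFiniteMeasureOnCompacts μ] {ζ Y : E → ℝ}
    (hζ : ContDiff ℝ 1 ζ) (hζc : HasCompactSupport ζ) (hY : Continuous Y) (v : E) :
    Integrable (fun x => Y x * fderiv ℝ ζ x v) μ :=
  (hY.mul ((hζ.continuous_fderiv one_ne_zero).clm_apply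
    continuous_const)).integrable_of_hasCompactSupport (hζc.fderiv_apply ℝ v).mul_left

lemma integrable_fderiv_apply_mul [IsFiniteMeasureOnCompacts μ] {ζ Y : E → ℝ}
    (hζ : Continuous ζ) (hζc : HasCompactSupport ζ) {C : ℝ} (hC : ∀ x, ‖fderiv ℝ Y x‖ ≤ C) (v : E) :
    Integrable (fun x => fderiv ℝ Y x v * ζ x) μ :=
  (hζ.integrable_of_hasCompactSupport hζc).bdd_mul (c := C * ‖v‖)
    (measurable_fderiv_apply_const ℝ Y v).aestronglyMeasurable
    (.of_forall fun x => (fderiv ℝ Y x).le_of_opNorm_le (hC x) v)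

variable [FiniteDimensional ℝ E]

lemma integrable_fderiv_apply {ζ : E → ℝ} {F : E → E} (hζ : ContDiff ℝ 1 ζ)
    (hζc : HasCompactSupport ζ) (hF : LocallyIntegrable F μ) :
    Integrable (fun x => fderiv ℝ ζ x (F x)) μ := by
  have hcont : Continuous (fderiv ℝ ζ) := hζ.continuous_fderiv one_ne_zero
  have hFnorm : LocallyIntegrable (‖F ·‖) μ := fun x => (hF x).norm
  refine (hFnorm.integrable_smul_left_of_hasCompactSupport hcont.norm (hζc.fderiv ℝ).norm).mono'
    (isBoundedBilinearMap_apply.continuous.comp_aestronglyMeasurable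
      (hcont.aestronglyMeasurable.prodMk hF.aestronglyMeasurable)) (.of_forall fun x => ?_)
  exact (fderiv ℝ ζ x).le_opNorm (F x)

lemma abs_integral_fderiv_apply_sub_le {ζ : E → ℝ} {F Y : E → E} {g : E → ℝ} {Z : ℝ}
    (hζ : ContDiff ℝ 1 ζ) (hζc : HasCompactSupport ζ) (hZ : ∀ x, ‖fderiv ℝ ζ x‖ ≤ Z)
    (hF : LocallyIntegrable F μ) (hY : LocallyIntegrable Y μ)
    (hg : IntegrableOn g (tsupport ζ) μ) (hFY : ∀ x, ‖F x - Y x‖ ≤ g x) :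
    |(∫ x, fderiv ℝ ζ x (F x) ∂μ) - ∫ x, fderiv ℝ ζ x (Y x) ∂μ|
      ≤ Z * ∫ x in tsupport ζ, g x ∂μ := by
  have hsupport : ∀ x ∉ tsupport ζ, fderiv ℝ ζ x (F x) - fderiv ℝ ζ x (Y x) = 0 := fun x hx => by
    simp [fderiv_of_notMem_tsupport ℝ hx]
  rw [← integral_sub (integrable_fderiv_apply hζ hζc hF) (integrable_fderiv_apply hζ hζc hY),
    ← setIntegral_eq_integral_of_forall_compl_eq_zero hsupport, ← integral_const_mul,
    ← Real.norm_eq_abs]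
  refine norm_integral_le_of_norm_le (hg.const_mul Z) (.of_forall fun x => ?_)
  rw [← map_sub]
  exact ((fderiv ℝ ζ x).le_of_opNorm_le (hZ x) _).trans
    (mul_le_mul_of_nonneg_left (hFY x) ((norm_nonneg _).trans (hZ x)))

variable [μ.IsAddHaarMeasure]

lemma integral_fderiv_apply_eq_neg_integral_mul_trace {ζ : E → ℝ} {Y : E → E} {C : ℝ}
    (hζ : ContDiff ℝ 1 ζ) (hζc : HasCompactSupport ζ) (hY : Differentiable ℝ Y)
    (hC : ∀ x, ‖fderiv ℝ Y x‖ ≤ C) :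
    ∫ x, fderiv ℝ ζ x (Y x) ∂μ
      = -∫ x, ζ x * LinearMap.trace ℝ E (fderiv ℝ Y x) ∂μ := by
  let b := Module.finBasis ℝ E
  let ℓ := fun i => LinearMap.toContinuousLinearMap (b.coord i)
  have hfderiv : ∀ i x, fderiv ℝ (fun x => ℓ i (Y x)) x = ℓ i ∘L fderiv ℝ Y x := fun i x =>
    ((ℓ i).hasFDerivAt.comp x (hY x).hasFDerivAt).fderiv
  have hbound : ∀ i x, ‖fderiv ℝ (fun x => ℓ i (Y x)) x‖ ≤ ‖ℓ i‖ * C := fun i x => by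
    rw [hfderiv]
    exact (ContinuousLinearMap.opNorm_comp_le _ _).trans (by gcongr; exact hC x)
  have hcont : ∀ i, Continuous fun x => ℓ i (Y x) := fun i => (ℓ i).continuous.comp hY.continuous
  have hparts : ∀ i, ∫ x, ℓ i (Y x) * fderiv ℝ ζ x (b i) ∂μ
      = -∫ x, fderiv ℝ (fun x => ℓ i (Y x)) x (b i) * ζ x ∂μ := fun i =>
    integral_mul_fderiv_eq_neg_fderiv_mul_of_integrable
      (integrable_fderiv_apply_mul hζ.continuous hζc (hbound i) (b i))
      (integrable_mul_fderiv_apply hζ hζc (hcont i) (b i))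
      (((hcont i).mul hζ.continuous).integrable_of_hasCompactSupport hζc.mul_left)
      (fun x _ => (ℓ i).differentiableAt.comp x (hY x))
      (fun x _ => hζ.differentiable one_ne_zero x)
  calc ∫ x, fderiv ℝ ζ x (Y x) ∂μ = ∫ x, ∑ i, ℓ i (Y x) * fderiv ℝ ζ x (b i) ∂μ := by
        congr with x
        conv_lhs => rw [← b.sum_repr (Y x), map_sum]
        simp [ℓ]
    _ = -∫ x, ∑ i, fderiv ℝ (fun x => ℓ i (Y x)) x (b i) * ζ x ∂μ := by
        rw [integral_finsetSum _ fun i _ => integrable_mul_fderiv_apply hζ hζc (hcont i) (b i),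
          integral_finsetSum _ fun i _ =>
            integrable_fderiv_apply_mul hζ.continuous hζc (hbound i) (b i),
          ← Finset.sum_neg_distrib]
        exact Finset.sum_congr rfl fun i _ => hparts i
    _ = -∫ x, ζ x * LinearMap.trace ℝ E (fderiv ℝ Y x) ∂μ := by
        congr with x
        simp only [hfderiv]
        rw [← Finset.sum_mul, mul_comm, LinearMap.trace_eq_matrix_trace ℝ b]
        simp [Matrix.trace, LinearMap.toMatrix_apply, ℓ]

lemma abs_integral_fderiv_apply_le {ζ : E → ℝ} {Y : E → E} {g : E → ℝ} {C : ℝ}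
    (hζ : ContDiff ℝ 1 ζ) (hζc : HasCompactSupport ζ) (hζ1 : ∀ x, |ζ x| ≤ 1)
    (hY : Differentiable ℝ Y) (hC : ∀ x, ‖fderiv ℝ Y x‖ ≤ C)
    (hg : IntegrableOn g (tsupport ζ) μ)
    (hYg : ∀ x ∈ tsupport ζ, |LinearMap.trace ℝ E (fderiv ℝ Y x)| ≤ g x) :
    |∫ x, fderiv ℝ ζ x (Y x) ∂μ| ≤ ∫ x in tsupport ζ, g x ∂μ := by
  have hsupport : ∀ x ∉ tsupport ζ, ζ x * LinearMap.trace ℝ E (fderiv ℝ Y x) = 0 := fun x hx => by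
    rw [image_eq_zero_of_notMem_tsupport hx, zero_mul]
  rw [integral_fderiv_apply_eq_neg_integral_mul_trace hζ hζc hY hC, abs_neg,
    ← setIntegral_eq_integral_of_forall_compl_eq_zero hsupport, ← Real.norm_eq_abs]
  refine norm_integral_le_of_norm_le hg
    (ae_restrict_of_forall_mem (isClosed_tsupport ζ).measurableSet fun x hx => ?_)
  rw [norm_mul]
  exact (mul_le_of_le_one_left (norm_nonneg _) (hζ1 x)).trans (hYg x hx)

end IntegrationByParts

lemma le_add_rpow_mul_rpow {s δ p : ℝ} (hs : 0 ≤ s) (hδ : 0 < δ) (hp : 1 ≤ p) :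
    s ≤ δ + δ ^ (1 - p) * s ^ p := by
  rcases le_total s δ with hsδ | hδs
  · exact hsδ.trans (le_add_of_nonneg_right (by positivity))
  · have hs' : 0 < s := hδ.trans_le hδs
    calc s = s ^ (1 - p) * s ^ p := by rw [← Real.rpow_add hs', sub_add_cancel, Real.rpow_one]
      _ ≤ δ ^ (1 - p) * s ^ p := by
          exact mul_le_mul_of_nonneg_right
            (Real.rpow_le_rpow_of_nonpos hδ hδs (sub_nonpos.2 hp)) (by positivity)
      _ ≤ δ + δ ^ (1 - p) * s ^ p := le_add_of_nonneg_left hδ.le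

lemma setIntegral_le_add_rpow_mul_setIntegral_rpow {X : Type*} [MeasurableSpace X]
    {ν : Measure X} {S : Set X} {f : X → ℝ} {δ p : ℝ} (hS : ν S ≠ ∞) (hf : ∀ x, 0 ≤ f x)
    (hδ : 0 < δ) (hp : 1 ≤ p) (hfint : IntegrableOn f S ν)
    (hfp : IntegrableOn (fun x => f x ^ p) S ν) :
    ∫ x in S, f x ∂ν ≤ δ * ν.real S + δ ^ (1 - p) * ∫ x in S, f x ^ p ∂ν := by
  have hconst : Integrable (fun _ => δ) (ν.restrict S) := integrableOn_const hS
  calc ∫ x in S, f x ∂ν ≤ ∫ x in S, (δ + δ ^ (1 - p) * f x ^ p) ∂ν :=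
        integral_mono hfint (hconst.add (hfp.const_mul _))
          fun x => le_add_rpow_mul_rpow (hf x) hδ hp
    _ = δ * ν.real S + δ ^ (1 - p) * ∫ x in S, f x ^ p ∂ν := by
        rw [integral_add hconst (hfp.const_mul _), setIntegral_const,
          integral_const_mul, smul_eq_mul, mul_comm δ]

namespace IsUnitHolderEntropy

variable {α K r Z : ℝ} {Φ : ℂ → ℂ} {φ' : ℝ → ℂ} {k ζ : ℂ → ℝ} {m : ℂ → ℂ}

lemma locallyIntegrable_comp (hΦ : IsUnitHolderEntropy α Φ φ') (hm : Measurable m)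
    (h1 : ∀ x, ‖m x‖ = 1) : LocallyIntegrable (Φ ∘ m) := by
  have hcirc : Φ ∘ m = fun x => Φ (circ (m x).arg) := funext fun x => by
    rw [Function.comp_apply, circ_arg (h1 x)]
  rw [hcirc]
  exact locallyIntegrable_of_norm_le (hΦ.continuous_comp_circ.measurable.comp
    (Complex.measurable_arg.comp hm)).stronglyMeasurable fun x => hΦ.norm_le _

lemma abs_integral_fderiv_comp_le (hΦ : IsUnitHolderEntropy α Φ φ') (hα : α ∈ Ioc 0 1)
    (hk : IsMollifier volume K r k) (hm : Measurable m) (h1 : ∀ x, ‖m x‖ = 1)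
    (hζ : ContDiff ℝ 1 ζ) (hζc : HasCompactSupport ζ) (hζ1 : ∀ x, |ζ x| ≤ 1)
    (hZ : ∀ x, ‖fderiv ℝ ζ x‖ ≤ Z)
    (hdiv : ∀ x ∈ tsupport ζ, LinearMap.trace ℝ ℂ (fderiv ℝ (k ⋆[lsmul ℝ ℝ, volume] m) x) = 0)
    {δ : ℝ} (hδ : 0 < δ) :
    |∫ x, fderiv ℝ ζ x (Φ (m x))|
      ≤ (240 * K ^ 3 / r + 10 * K * Z * δ ^ (-1 - α))
          * (∫ x in tsupport ζ, meanOsc volume (2 + α) r m x ^ (2 + α))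
        + 10 * K * Z * δ * volume.real (tsupport ζ) := by
  have hα₀ : 0 < α := hα.1
  have hp : 2 ≤ 2 + α := by linarith
  have hS : volume (tsupport ζ) < ∞ := hζc.isCompact.measure_lt_top
  have hK : 0 ≤ K := zero_le_one.trans hk.one_le
  have hZ₀ : 0 ≤ Z := (norm_nonneg _).trans (hZ 0)
  set s := meanOsc volume (2 + α) r m
  set Y := mollifiedFlux Φ φ' k m
  have hYd : Differentiable ℝ Y := hΦ.differentiable_mollifiedFlux hα₀ hk hm h1
  have hspow : IntegrableOn (fun x => s x ^ (2 + α)) (tsupport ζ) :=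
    integrableOn_meanOsc_rpow hm.stronglyMeasurable (fun x => (h1 x).le) hk.radius_pos
      (by linarith) (by linarith) hS
  have hsint : IntegrableOn s (tsupport ζ) := by
    simpa using integrableOn_meanOsc_rpow hm.stronglyMeasurable (fun x => (h1 x).le) hk.radius_pos
      (p := 2 + α) (by linarith) zero_le_one hS
  have hflux : |∫ x, fderiv ℝ ζ x (Y x)| ≤ 240 * K ^ 3 / r * ∫ x in tsupport ζ, s x ^ (2 + α) := by
    rw [← integral_const_mul]
    exact abs_integral_fderiv_apply_le hζ hζc hζ1 hYd
      (hΦ.norm_fderiv_mollifiedFlux_le hα₀ hk hm h1) (hspow.const_mul _)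
      fun x hx => hΦ.abs_trace_fderiv_mollifiedFlux_le hα hk hm h1 hp (hdiv x hx)
  have herror : |(∫ x, fderiv ℝ ζ x (Φ (m x))) - ∫ x, fderiv ℝ ζ x (Y x)|
      ≤ Z * ∫ x in tsupport ζ, 10 * K * s x :=
    abs_integral_fderiv_apply_sub_le hζ hζc hZ (hΦ.locallyIntegrable_comp hm h1)
      hYd.continuous.locallyIntegrable (hsint.const_mul _) fun x => by
        rw [norm_sub_rev]
        exact hΦ.norm_mollifiedFlux_sub_le hk hm h1 (by linarith) x
  have hyoung : ∫ x in tsupport ζ, s x ≤ δ * volume.real (tsupport ζ)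
      + δ ^ (-1 - α) * ∫ x in tsupport ζ, s x ^ (2 + α) := by
    rw [show -1 - α = 1 - (2 + α) by ring]
    exact setIntegral_le_add_rpow_mul_setIntegral_rpow hS.ne (meanOsc_nonneg _ _ _ _) hδ
      (by linarith) hsint hspow
  rw [integral_const_mul] at herror
  have hscaled := mul_le_mul_of_nonneg_left hyoung (by positivity : 0 ≤ 10 * K * Z)
  linarith [abs_sub_abs_le_abs_sub (∫ x, fderiv ℝ ζ x (Φ (m x))) (∫ x, fderiv ℝ ζ x (Y x))]

end IsUnitHolderEntropy

/-! ### Averaged increments and the limit of vanishing scale -/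

/-- The averaged increment `⨍_{B_r} ∫_{U ∩ (Ω - h)} |m(x + h) - m(x)|^p dx dh`, as an extended
nonnegative number: the quantity that controls the entropy production. -/
def averagedIncrement (μ : Measure E) (p : ℝ) (Ω U : Set E) (m : E → V) (r : ℝ) : ℝ≥0∞ :=
  (μ (ball 0 r))⁻¹ *
    ∫⁻ h in ball 0 r, ∫⁻ x in U ∩ {x | x + h ∈ Ω}, (‖m (x + h) - m x‖₊ : ℝ≥0∞) ^ p ∂μ ∂μ

lemma averagedIncrement_congr_ae [MeasurableAdd E] [μ.IsAddRightInvariant] {Ω U : Set E}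
    {m m' : E → V} (hΩ : MeasurableSet Ω) (hU : U ⊆ Ω) (h : ∀ᵐ x ∂μ.restrict Ω, m x = m' x)
    (p r : ℝ) :
    averagedIncrement μ p Ω U m r = averagedIncrement μ p Ω U m' r := by
  have hΩae : ∀ᵐ x ∂μ, x ∈ Ω → m x = m' x := (ae_restrict_iff' hΩ).1 h
  have hshift : ∀ t, ∀ᵐ x ∂μ.restrict {x | x + t ∈ Ω}, m (x + t) = m' (x + t) := fun t =>
    (ae_restrict_iff' (measurable_add_const t hΩ)).2
      ((measurePreserving_add_right μ t).quasiMeasurePreserving.ae hΩae)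
  unfold averagedIncrement
  congr with t
  refine lintegral_congr_ae ?_
  filter_upwards [ae_restrict_of_ae_restrict_of_subset (inter_subset_left.trans hU) h,
    ae_restrict_of_ae_restrict_of_subset inter_subset_right (hshift t)] with x hx hxt
  rw [hx, hxt]

section AveragedIncrement

variable [NormedSpace ℝ E] [BorelSpace E] [FiniteDimensional ℝ E] [μ.IsAddHaarMeasure]
  {p r B : ℝ} {m : E → V}

lemma setLIntegral_ball_zero_comp_neg (r : ℝ) (g : E → ℝ≥0∞) :
    ∫⁻ t in ball 0 r, g (-t) ∂μ = ∫⁻ t in ball 0 r, g t ∂μ := by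
  rw [← lintegral_indicator measurableSet_ball, ← lintegral_indicator measurableSet_ball,
    ← lintegral_neg_eq_self]
  congr with t
  simp [indicator]

lemma ofReal_meanOsc_rpow (hm : StronglyMeasurable m) (hB : ∀ x, ‖m x‖ ≤ B) (hr : 0 < r)
    (hp : 0 < p) (x : E) :
    ENNReal.ofReal (meanOsc μ p r m x ^ p)
      = (μ (ball 0 r))⁻¹ * ∫⁻ t in ball 0 r, (‖m (x - t) - m x‖₊ : ℝ≥0∞) ^ p ∂μ := by
  have hμ : 0 < μ.real (ball (0 : E) r) := measureReal_ball_pos μ 0 hr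
  rw [meanOsc_rpow hp.ne', setAverage_eq, smul_eq_mul, ENNReal.ofReal_mul (by positivity),
    ENNReal.ofReal_inv_of_pos hμ, ofReal_measureReal measure_ball_lt_top.ne,
    ofReal_integral_eq_lintegral_ofReal (integrableOn_ball_norm_sub_rpow hm hB hp.le x r)
      (.of_forall fun t => by positivity)]
  congr with t
  rw [← ENNReal.ofReal_rpow_of_nonneg (norm_nonneg _) hp.le, ofReal_norm, enorm_eq_nnnorm]

lemma ofReal_setIntegral_meanOsc_rpow_le {S Ω U : Set E} (hm : StronglyMeasurable m)
    (hB : ∀ x, ‖m x‖ ≤ B) (hr : 0 < r) (hp : 0 < p) (hS : μ S < ∞) (hSU : S ⊆ U)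
    (hSΩ : ∀ x ∈ S, ∀ h ∈ ball 0 r, x + h ∈ Ω) :
    ENNReal.ofReal (∫ x in S, meanOsc μ p r m x ^ p ∂μ) ≤ averagedIncrement μ p Ω U m r := by
  have : SFinite (μ.restrict S) :=
    have : Fact (μ S < ∞) := ⟨hS⟩
    inferInstance
  have hincr : StronglyMeasurable fun z : E × E => m (z.1 - z.2) - m z.1 :=
    (hm.comp_measurable (measurable_fst.sub measurable_snd)).sub
      (hm.comp_measurable measurable_fst)
  have hmeas : Measurable fun z : E × E => (‖m (z.1 - z.2) - m z.1‖₊ : ℝ≥0∞) ^ p :=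
    hincr.enorm.pow_const p
  rw [ofReal_integral_eq_lintegral_ofReal (integrableOn_meanOsc_rpow hm hB hr hp hp.le hS)
    (.of_forall fun x => Real.rpow_nonneg (meanOsc_nonneg μ p r m x) p)]
  calc ∫⁻ x in S, ENNReal.ofReal (meanOsc μ p r m x ^ p) ∂μ
      = (μ (ball 0 r))⁻¹ *
          ∫⁻ x in S, ∫⁻ t in ball 0 r, (‖m (x - t) - m x‖₊ : ℝ≥0∞) ^ p ∂μ ∂μ := by
        simp only [ofReal_meanOsc_rpow hm hB hr hp]
        exact lintegral_const_mul _ hmeas.lintegral_prod_right'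
    _ = (μ (ball 0 r))⁻¹ *
          ∫⁻ h in ball 0 r, ∫⁻ x in S, (‖m (x + h) - m x‖₊ : ℝ≥0∞) ^ p ∂μ ∂μ := by
        rw [lintegral_lintegral_swap hmeas.aemeasurable, ← setLIntegral_ball_zero_comp_neg]
        simp only [sub_neg_eq_add]
    _ ≤ averagedIncrement μ p Ω U m r := by
        unfold averagedIncrement
        exact mul_le_mul' le_rfl (setLIntegral_mono' measurableSet_ball fun h hh =>
          lintegral_mono_set fun x hx => ⟨hSU hx, hSΩ x hx h hh⟩)

end AveragedIncrement

lemma le_ofReal_mul_liminf {ι : Type*} {l : Filter ι} [l.NeBot] {I : ℝ≥0∞} {R : ι → ℝ≥0∞} {C : ℝ}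
    (hC : 0 < C)
    (h : ∀ η > 0, ∀ᶠ i in l, I ≤ ENNReal.ofReal (C + η) * R i + ENNReal.ofReal η) :
    I ≤ ENNReal.ofReal C * liminf R l := by
  rcases eq_or_ne (liminf R l) ∞ with htop | hfin
  · rw [htop, ENNReal.mul_top (by simpa using hC)]
    exact le_top
  have hη : ∀ η > 0, I ≤ ENNReal.ofReal (C + η) * liminf R l + ENNReal.ofReal η := fun η hη => by
    have hCη : ENNReal.ofReal (C + η) ≠ 0 := by simpa using add_pos hC hη
    rw [← tsub_le_iff_right, mul_comm, ← ENNReal.div_le_iff hCη ENNReal.ofReal_ne_top]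
    refine le_liminf_of_le isCobounded_ge_of_top ((h η hη).mono fun i hi => ?_)
    rwa [ENNReal.div_le_iff hCη ENNReal.ofReal_ne_top, tsub_le_iff_right, mul_comm]
  have hlim : Tendsto (fun η => ENNReal.ofReal (C + η) * liminf R l + ENNReal.ofReal η) (𝓝[>] 0)
      (𝓝 (ENNReal.ofReal C * liminf R l)) := by
    have hCη : Tendsto (fun η => ENNReal.ofReal (C + η)) (𝓝[>] 0) (𝓝 (ENNReal.ofReal C)) :=
      ENNReal.tendsto_ofReal (tendsto_nhdsWithin_of_tendsto_nhds
        (Continuous.tendsto' (by fun_prop) _ _ (add_zero C)))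
    have hη₀ : Tendsto ENNReal.ofReal (𝓝[>] 0) (𝓝 0) :=
      tendsto_nhdsWithin_of_tendsto_nhds
        (Continuous.tendsto' ENNReal.continuous_ofReal _ _ ENNReal.ofReal_zero)
    simpa using (ENNReal.Tendsto.mul_const hCη (.inr hfin)).add hη₀
  exact ge_of_tendsto hlim (eventually_nhdsWithin_of_forall hη)

lemma exists_measurable_norm_eq_one_ae_eq {X : Type*} [MeasurableSpace X] {ν : Measure X}
    {m : X → ℂ} (hm : AEStronglyMeasurable m ν) (h1 : ∀ᵐ x ∂ν, ‖m x‖ = 1) :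
    ∃ m' : X → ℂ, Measurable m' ∧ (∀ x, ‖m' x‖ = 1) ∧ ∀ᵐ x ∂ν, m x = m' x := by
  classical
  have hmk : Measurable (hm.mk m) := hm.stronglyMeasurable_mk.measurable
  refine ⟨fun x => if ‖hm.mk m x‖ = 1 then hm.mk m x else 1,
    .ite (measurableSet_eq_fun hmk.norm measurable_const) hmk measurable_const, fun x => ?_, ?_⟩
  · dsimp only
    split_ifs with hx
    exacts [hx, norm_one]
  · filter_upwards [hm.ae_eq_mk, h1] with x hx hx1
    rw [if_pos (hx ▸ hx1), hx]

lemma DivFree.congr_ae {Ω : Set ℂ} {m m' : ℂ → ℂ} (hdiv : DivFree Ω m)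
    (h : ∀ᵐ x ∂volume.restrict Ω, m x = m' x) : DivFree Ω m' := fun ζ hζ => by
  rw [← hdiv ζ hζ]
  exact integral_congr_ae (h.mono fun x hx => by simp only [hx])

namespace IsUnitHolderEntropy

variable {α ε K Z : ℝ} {Φ : ℂ → ℂ} {φ' : ℝ → ℂ} {k ζ : ℂ → ℝ} {m : ℂ → ℂ} {Ω U : Set ℂ}

lemma ofReal_abs_integral_fderiv_comp_le (hΦ : IsUnitHolderEntropy α Φ φ') (hα : α ∈ Ioc 0 1)
    (hε : 0 < ε) (hk : IsMollifier volume K (2 * ε) k) (hm : Measurable m)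
    (h1 : ∀ x, ‖m x‖ = 1) (hdiv : DivFree Ω m) (hζ : TestFun1 U ζ) (hζ1 : ∀ x, |ζ x| ≤ 1)
    (hZ : ∀ x, ‖fderiv ℝ ζ x‖ ≤ Z) (hball : ∀ x ∈ tsupport ζ, ball x (2 * ε) ⊆ Ω)
    {δ : ℝ} (hδ : 0 < δ) :
    ENNReal.ofReal |∫ x, fderiv ℝ ζ x (Φ (m x))|
      ≤ ENNReal.ofReal (120 * K ^ 3 + 10 * K * Z * δ ^ (-1 - α) * ε)
          * ((ENNReal.ofReal ε)⁻¹ * averagedIncrement volume (2 + α) Ω U m (2 * ε))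
        + ENNReal.ofReal (10 * K * Z * δ * volume.real (tsupport ζ)) := by
  obtain ⟨hζs, hζc, hζU⟩ := hζ
  have hK : 0 ≤ K := zero_le_one.trans hk.one_le
  have hZ₀ : 0 ≤ Z := (norm_nonneg _).trans (hZ 0)
  set J := ∫ x in tsupport ζ, meanOsc volume (2 + α) (2 * ε) m x ^ (2 + α)
  have hJ₀ : 0 ≤ J := integral_nonneg fun x => Real.rpow_nonneg (meanOsc_nonneg _ _ _ _ _) _
  have hJ : ENNReal.ofReal J ≤ averagedIncrement volume (2 + α) Ω U m (2 * ε) :=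
    ofReal_setIntegral_meanOsc_rpow_le hm.stronglyMeasurable (fun x => (h1 x).le) (by positivity)
      (by linarith [hα.1]) hζc.isCompact.measure_lt_top hζU
      fun x hx h hh => hball x hx (by simpa using hh)
  have hscale := hΦ.abs_integral_fderiv_comp_le hα hk hm h1 hζs hζc hζ1 hZ
    (fun x hx => trace_fderiv_convolution_eq_zero_of_divFree hk
      (locallyIntegrable_of_norm_le hm.stronglyMeasurable fun x => (h1 x).le) hdiv (hball x hx)) hδ
  calc ENNReal.ofReal |∫ x, fderiv ℝ ζ x (Φ (m x))|
      ≤ ENNReal.ofReal ((120 * K ^ 3 + 10 * K * Z * δ ^ (-1 - α) * ε) * (ε⁻¹ * J)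
          + 10 * K * Z * δ * volume.real (tsupport ζ)) := by
        refine ENNReal.ofReal_le_ofReal (hscale.trans_eq ?_)
        field_simp
        ring
    _ = ENNReal.ofReal (120 * K ^ 3 + 10 * K * Z * δ ^ (-1 - α) * ε)
          * ((ENNReal.ofReal ε)⁻¹ * ENNReal.ofReal J)
        + ENNReal.ofReal (10 * K * Z * δ * volume.real (tsupport ζ)) := by
        rw [ENNReal.ofReal_add (by positivity) (by positivity), ENNReal.ofReal_mul (by positivity),
          ENNReal.ofReal_mul (by positivity), ENNReal.ofReal_inv_of_pos hε]
    _ ≤ _ := by gcongr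

lemma eventually_ofReal_abs_integral_fderiv_comp_le (hΦ : IsUnitHolderEntropy α Φ φ')
    (hα : α ∈ Ioc 0 1) (hK : ∀ r > 0, ∃ k : ℂ → ℝ, IsMollifier volume K r k)
    (hm : Measurable m) (h1 : ∀ x, ‖m x‖ = 1) (hΩ : IsOpen Ω) (hdiv : DivFree Ω m) (hU : U ⊆ Ω)
    (hζ : TestFun1 U ζ) (hζ1 : ∀ x, |ζ x| ≤ 1) {η : ℝ} (hη : 0 < η) :
    ∀ᶠ ε in 𝓝[>] 0, ENNReal.ofReal |∫ x, fderiv ℝ ζ x (Φ (m x))|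
      ≤ ENNReal.ofReal (120 * K ^ 3 + η)
          * ((ENNReal.ofReal ε)⁻¹ * averagedIncrement volume (2 + α) Ω U m (2 * ε))
        + ENNReal.ofReal η := by
  have hK₀ : 0 ≤ K := zero_le_one.trans (hK 1 one_pos).choose_spec.one_le
  obtain ⟨Z, hZ⟩ := (hζ.2.1.fderiv ℝ).exists_bound_of_continuous
    (hζ.1.continuous_fderiv one_ne_zero)
  have hZ₀ : 0 ≤ Z := (norm_nonneg _).trans (hZ 0)
  obtain ⟨ρ, hρ, hρΩ⟩ := hζ.2.1.isCompact.exists_thickening_subset_open hΩ (hζ.2.2.trans hU)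
  obtain ⟨δ, hδ, hδη⟩ := exists_pos_mul_lt hη (10 * K * Z * volume.real (tsupport ζ))
  obtain ⟨ε₀, hε₀, hε₀η⟩ := exists_pos_mul_lt hη (10 * K * Z * δ ^ (-1 - α))
  filter_upwards [Ioo_mem_nhdsGT (lt_min hε₀ (half_pos hρ))] with ε ⟨hε, hεmin⟩
  have hεε₀ : ε < ε₀ := hεmin.trans_le (min_le_left _ _)
  have hερ : 2 * ε < ρ := by linarith [hεmin.trans_le (min_le_right ε₀ (ρ / 2))]
  have hball : ∀ x ∈ tsupport ζ, ball x (2 * ε) ⊆ Ω := fun x hx =>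
    (ball_subset_ball hερ.le).trans ((ball_subset_thickening hx ρ).trans hρΩ)
  obtain ⟨k, hk⟩ := hK (2 * ε) (by positivity)
  refine (hΦ.ofReal_abs_integral_fderiv_comp_le hα hε hk hm h1 hdiv hζ hζ1 hZ hball hδ).trans ?_
  gcongr
  · calc 10 * K * Z * δ ^ (-1 - α) * ε ≤ 10 * K * Z * δ ^ (-1 - α) * ε₀ := by gcongr
      _ ≤ η := hε₀η.le
  · linarith

end IsUnitHolderEntropy

lemma EntC1aBall.exists_isUnitHolderEntropy {α : ℝ} {Φ : ℂ → ℂ} (hΦ : EntC1aBall α Φ) :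
    ∃ φ', IsUnitHolderEntropy α Φ φ' := by
  obtain ⟨φ', ⟨hderiv, -, hdot⟩, hΦ1, hφ'1, hholder⟩ := hΦ
  refine ⟨φ', hderiv, hΦ1, hφ'1, hholder, fun θ => ?_⟩
  simp [← hdot θ, dotR, Complex.inner]

theorem statement6_general : ∃ C : ℝ, 0 < C ∧ ∀ α ∈ Ioc (0 : ℝ) 1, ∀ Ω : Set ℂ, IsOpen Ω →
    ∀ m : ℂ → ℂ, AEStronglyMeasurable m (volume.restrict Ω) →
      (∀ᵐ x ∂volume.restrict Ω, ‖m x‖ = 1) → DivFree Ω m →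
    ∀ (Φ : ℂ → ℂ) (φ' : ℝ → ℂ), IsUnitHolderEntropy α Φ φ' → ∀ U ⊆ Ω,
    ∀ ζ : ℂ → ℝ, TestFun1 U ζ → (∀ x, |ζ x| ≤ 1) →
      ENNReal.ofReal |∫ x in U, fderiv ℝ ζ x (Φ (m x))|
        ≤ ENNReal.ofReal C * liminf (fun ε : ℝ =>
            (ENNReal.ofReal ε)⁻¹ * averagedIncrement volume (2 + α) Ω U m (2 * ε)) (𝓝[>] 0) := by
  obtain ⟨K, hK⟩ := exists_isMollifier (volume : Measure ℂ)
  have hK1 : 1 ≤ K := (hK 1 one_pos).choose_spec.one_le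
  refine ⟨120 * K ^ 3, by positivity, fun α hα Ω hΩ m hm h1 hdiv Φ φ' hΦ U hU ζ hζ hζ1 => ?_⟩
  obtain ⟨m', hm', h1', hmm'⟩ := exists_measurable_norm_eq_one_ae_eq hm h1
  have hintegral : ∫ x in U, fderiv ℝ ζ x (Φ (m x)) = ∫ x, fderiv ℝ ζ x (Φ (m' x)) := by
    rw [← setIntegral_eq_integral_of_forall_compl_eq_zero (s := U)
      (f := fun x => fderiv ℝ ζ x (Φ (m' x))) fun x hx => by
        simp [fderiv_of_notMem_tsupport ℝ fun h => hx (hζ.2.2 h)]]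
    exact integral_congr_ae ((ae_restrict_of_ae_restrict_of_subset hU hmm').mono
      fun x hx => by simp only [hx])
  rw [hintegral]
  simp only [averagedIncrement_congr_ae hΩ.measurableSet hU hmm']
  exact le_ofReal_mul_liminf (by positivity) fun η hη =>
    hΦ.eventually_ofReal_abs_integral_fderiv_comp_le hα hK hm' h1' hΩ (hdiv.congr_ae hmm') hU hζ
      hζ1 hη

end

theorem statement6 (α : ℝ) (hα : α ∈ Set.Ioo (0:ℝ) 1) :
    ∃ C : ℝ, 0 < C ∧
    ∀ (Ω : Set ℂ), IsOpen Ω → IsBounded Ω →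
    ∀ m : ℂ → ℂ, AEStronglyMeasurable m (volume.restrict Ω) →
      (∀ᵐ x ∂(volume.restrict Ω), ‖m x‖ = 1) → DivFree Ω m →
      besovE Ω (2+α) (1/(2+α)) m < ⊤ →
    ∀ Φ : ℂ → ℂ, EntC1aBall α Φ →
    ∀ U : Set ℂ, IsOpen U → U ⊆ Ω →
    ∀ ζ : ℂ → ℝ, TestFun1 U ζ → (∀ x, |ζ x| ≤ 1) →
      ENNReal.ofReal |∫ x in U, fderiv ℝ ζ x (Φ (m x))|
        ≤ ENNReal.ofReal C *
          Filter.liminf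
            (fun ε : ℝ =>
              (ENNReal.ofReal ε)⁻¹ * ((volume (Metric.ball (0:ℂ) (2*ε)))⁻¹ *
                ∫⁻ h in Metric.ball (0:ℂ) (2*ε),
                  ∫⁻ x in U ∩ {x | x + h ∈ Ω}, (‖m (x+h) - m x‖₊ : ℝ≥0∞) ^ (2+α)))
            (𝓝[>] (0:ℝ)) := by
  obtain ⟨C, hC, hbound⟩ := statement6_general
  refine ⟨C, hC, fun Ω hΩ _ m hm h1 hdiv _ Φ hΦ U _ hU ζ hζ hζ1 => ?_⟩
  obtain ⟨φ', hφ'⟩ := hΦ.exists_isUnitHolderEntropy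
  exact hbound α ⟨hα.1, hα.2.le⟩ Ω hΩ m hm h1 hdiv Φ φ' hφ' U hU ζ hζ hζ1

end Eikonal
end
end
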